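/- arXiv:0901.2840 — 8 statements merged into one kernel-verified Lean document; each statement's English description precedes it below -/
import Mathlib

section
/- Let f, g : (0,1] → (0,∞) and let p, c > 0 be constants such that f is nondecreasing, the function t ↦ log g(e^{-t}) is bounded and uniformly continuous on [0,∞), and such that for every r in some dense subset D of (0,1) one has t^{-p} f(t) g(t) → c as t → 0 along the geometric sequence (r^n)_{n∈ℕ}. Then t^{-p} f(t) g(t) → c as t → 0 along all of (0,1). -/
open Filter

lemma interp_aux (F G : ℝ → ℝ) (p L : ℝ) (hp : 0 < p)
    (hF : ∀ x y, 0 ≤ x → x ≤ y → F y ≤ F x)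
    (hG : UniformContinuousOn G (Set.Ici (0:ℝ)))
    (h : ∀ η > 0, ∃ a, 0 < a ∧ a < η ∧
      Tendsto (fun n : ℕ => p * (n * a) + F (n * a) + G (n * a)) atTop (nhds L)) :
    Tendsto (fun s => p * s + F s + G s) atTop (nhds L) := by
  rw [Metric.tendsto_atTop]
  intro ε hε
  rw [Metric.uniformContinuousOn_iff] at hG
  obtain ⟨δ, hδ, hG⟩ := hG (ε / 3) (by positivity)
  obtain ⟨a, ha, haη, hlim⟩ := h (min δ (ε / 3 / p)) (by positivity)
  have haδ : a < δ := lt_of_lt_of_le haη (min_le_left _ _)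
  have hap : p * a < ε / 3 := by
    have := lt_of_lt_of_le haη (min_le_right _ _)
    rw [lt_div_iff₀ hp] at this
    linarith
  obtain ⟨N, hN⟩ := (Metric.tendsto_atTop.1 hlim) (ε / 3) (by positivity)
  refine ⟨N * a, fun s hs => ?_⟩
  have hs0 : 0 ≤ s := le_trans (by positivity) hs
  set n := ⌊s / a⌋₊ with hn
  have h1 : (n : ℝ) * a ≤ s := (le_div_iff₀ ha).1 (Nat.floor_le (by positivity))
  have h2 : s < ((n : ℝ) + 1) * a := (div_lt_iff₀ ha).1 (Nat.lt_floor_add_one _)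
  have hNn : N ≤ n := Nat.le_floor ((le_div_iff₀ ha).2 hs)
  have e1 := hN n hNn
  have e2 := hN (n + 1) (by omega)
  have hna : 0 ≤ (n : ℝ) * a := by positivity
  have f1 := hF _ _ hna h1
  have f2 := hF _ _ hs0 h2.le
  have g1 := hG (n * a) hna s hs0 (by
    rw [Real.dist_eq, abs_lt]; constructor <;> linarith)
  have g2 := hG (((n : ℝ) + 1) * a) (by simp only [Set.mem_Ici]; positivity) s hs0 (by
    rw [Real.dist_eq, abs_lt]; constructor <;> linarith)
  push_cast at e2
  rw [Real.dist_eq, abs_lt] at *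
  have m1 : p * (n * a) ≤ p * s := by gcongr
  have m2 : p * s ≤ p * (((n : ℝ) + 1) * a) := by gcongr
  have m3 : p * (((n : ℝ) + 1) * a) = p * (n * a) + p * a := by ring
  constructor <;> linarith [e1.1, e1.2, e2.1, e2.2, g1.1, g1.2, g2.1, g2.2]

/-- **Interpolation principle (Lemma 2.3).**
Let `f, g : (0,1] → (0,∞)` and `p, c > 0` with `f` nondecreasing, `t ↦ log g(e^{-t})`
bounded and uniformly continuous on `[0,∞)`, and `t^{-p} f(t) g(t) → c` as `t → 0`
along every geometric sequence `(r^n)` with ratio `r` in a dense subset `D` of `(0,1)`.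
Then `t^{-p} f(t) g(t) → c` as `t → 0` along all of `(0,1)`. -/
theorem interpolation_principle
    (f g : ℝ → ℝ) (p c : ℝ) (hp : 0 < p) (hc : 0 < c)
    (hf_pos : ∀ t ∈ Set.Ioc (0:ℝ) 1, 0 < f t)
    (hg_pos : ∀ t ∈ Set.Ioc (0:ℝ) 1, 0 < g t)
    (hf_mono : MonotoneOn f (Set.Ioc (0:ℝ) 1))
    (hg_bdd : ∃ M : ℝ, ∀ t : ℝ, 0 ≤ t → |Real.log (g (Real.exp (-t)))| ≤ M)
    (hg_uc : UniformContinuousOn (fun t => Real.log (g (Real.exp (-t)))) (Set.Ici (0:ℝ)))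
    (D : Set ℝ) (hD : D ⊆ Set.Ioo 0 1) (hDdense : Set.Ioo (0:ℝ) 1 ⊆ closure D)
    (hlim : ∀ r ∈ D, Tendsto (fun n : ℕ => (r ^ n) ^ (-p) * f (r ^ n) * g (r ^ n))
      atTop (nhds c)) :
    Tendsto (fun t : ℝ => t ^ (-p) * f t * g t) (nhdsWithin 0 (Set.Ioo 0 1)) (nhds c) := by
  have hmem : ∀ s : ℝ, 0 ≤ s → Real.exp (-s) ∈ Set.Ioc (0:ℝ) 1 := fun s hs =>
    ⟨Real.exp_pos _, Real.exp_le_one_iff.2 (by linarith)⟩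
  have key : ∀ s : ℝ, 0 ≤ s → Real.log ((Real.exp (-s)) ^ (-p) * f (Real.exp (-s)) *
      g (Real.exp (-s))) = p * s + Real.log (f (Real.exp (-s))) +
      Real.log (g (Real.exp (-s))) := by
    intro s hs
    have hf := hf_pos _ (hmem s hs)
    have hg := hg_pos _ (hmem s hs)
    have he : 0 < (Real.exp (-s)) ^ (-p) := Real.rpow_pos_of_pos (Real.exp_pos _) _
    rw [Real.log_mul (by positivity) hg.ne', Real.log_mul he.ne' hf.ne',
      Real.log_rpow (Real.exp_pos _), Real.log_exp]
    ring
  have H := interp_aux (fun s => Real.log (f (Real.exp (-s))))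
    (fun s => Real.log (g (Real.exp (-s)))) p (Real.log c) hp
    (by
      intro x y hx hxy
      have hy := hx.trans hxy
      exact Real.log_le_log (hf_pos _ (hmem y hy))
        (hf_mono (hmem y hy) (hmem x hx) (Real.exp_le_exp.2 (by linarith))))
    hg_uc
    (by
      intro η hη
      have hlt : Real.exp (-η) < 1 := Real.exp_lt_one_iff.2 (by linarith)
      obtain ⟨x, hx1, hx2⟩ := exists_between hlt
      have hx0 := (Real.exp_pos (-η)).trans hx1
      obtain ⟨r, hr1, hrD⟩ := mem_closure_iff.1 (hDdense ⟨hx0, hx2⟩)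
        (Set.Ioo (Real.exp (-η)) 1) isOpen_Ioo ⟨hx1, hx2⟩
      have hr0 : 0 < r := (hD hrD).1
      refine ⟨-Real.log r, by linarith [Real.log_neg hr0 hr1.2], ?_, ?_⟩
      · have := (Real.lt_log_iff_exp_lt hr0).2 hr1.1
        linarith
      · refine ((hlim r hrD).log hc.ne').congr fun n => ?_
        have e : r ^ n = Real.exp (-(n * -Real.log r)) := by
          rw [mul_neg, neg_neg, Real.exp_nat_mul, Real.exp_log hr0]
        rw [e]
        exact key _ (mul_nonneg n.cast_nonneg (by linarith [Real.log_neg hr0 hr1.2])))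
  have T : Tendsto (fun t : ℝ => -Real.log t) (nhdsWithin 0 (Set.Ioo 0 1)) atTop :=
    (tendsto_neg_atBot_atTop.comp Real.tendsto_log_nhdsGT_zero).mono_left
      (nhdsWithin_mono _ fun x hx => hx.1)
  have R := (Real.continuous_exp.tendsto _).comp (H.comp T)
  rw [Real.exp_log hc] at R
  refine R.congr' ?_
  filter_upwards [self_mem_nhdsWithin] with t ht
  have k := key (-Real.log t) (by linarith [Real.log_neg ht.1 ht.2])
  simp only [Function.comp]
  rw [← k, neg_neg, Real.exp_log ht.1, Real.exp_log]
  have h1 := hf_pos t ⟨ht.1, ht.2.le⟩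
  have h2 := hg_pos t ⟨ht.1, ht.2.le⟩
  have h3 := Real.rpow_pos_of_pos ht.1 (-p)
  positivity
end

section
/- For every dimension d ≥ 1 and every t > 0 there exists a constant C > 0 such that p_t(x + y) ≤ C · p_{t+h}(x) for all x, y ∈ ℝ^d and all h with 0 < h ≤ t and |y| ≤ h. -/
open Filter MeasureTheory

/-- The standard Gaussian density `p_t(x) = (2πt)^{-d/2} exp(-|x|²/(2t))` on `ℝ^d`. -/
noncomputable def gaussDensity (d : ℕ) (t : ℝ) (x : EuclideanSpace ℝ (Fin d)) : ℝ :=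
  (2 * Real.pi * t) ^ (-(d : ℝ) / 2) * Real.exp (-‖x‖ ^ 2 / (2 * t))

/-- **Lemma 3.1.** For every `d ≥ 1` and `t > 0` there is a constant `C > 0` with
`p_t(x+y) ≤ C · p_{t+h}(x)` whenever `0 < h ≤ t` and `|y| ≤ h`. -/
theorem gaussDensity_shift_le (d : ℕ) (hd : 1 ≤ d) (t : ℝ) (ht : 0 < t) :
    ∃ C : ℝ, 0 < C ∧ ∀ (x y : EuclideanSpace ℝ (Fin d)) (h : ℝ),
      0 < h → h ≤ t → ‖y‖ ≤ h →
      gaussDensity d t (x + y) ≤ C * gaussDensity d (t + h) x := by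
  refine ⟨(2 : ℝ) ^ ((d : ℝ) / 2) * Real.exp (t / 2), by positivity, ?_⟩
  intro x y h h0 hht hy
  have hpi := Real.pi_pos
  have hth : 0 < t + h := by linarith
  unfold gaussDensity
  have hpre : (2 * Real.pi * t) ^ (-(d : ℝ) / 2)
      ≤ (2 : ℝ) ^ ((d : ℝ) / 2) * (2 * Real.pi * (t + h)) ^ (-(d : ℝ) / 2) := by
    have h1 : (2 * (2 * Real.pi * t)) ^ (-(d : ℝ) / 2)
        ≤ (2 * Real.pi * (t + h)) ^ (-(d : ℝ) / 2) := by
      apply Real.rpow_le_rpow_of_nonpos (by positivity)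
      · nlinarith
      · have : (0 : ℝ) ≤ d := Nat.cast_nonneg d
        linarith
    rw [Real.mul_rpow (by norm_num) (by positivity)] at h1
    have h2 : (2 : ℝ) ^ ((d : ℝ) / 2) * (2 : ℝ) ^ (-(d : ℝ) / 2) = 1 := by
      rw [← Real.rpow_add (by norm_num)]
      have : (d : ℝ) / 2 + -(d : ℝ) / 2 = 0 := by ring
      rw [this, Real.rpow_zero]
    calc (2 * Real.pi * t) ^ (-(d : ℝ) / 2)
        = (2 : ℝ) ^ ((d : ℝ) / 2)
          * ((2 : ℝ) ^ (-(d : ℝ) / 2) * (2 * Real.pi * t) ^ (-(d : ℝ) / 2)) := by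
          rw [← mul_assoc, h2, one_mul]
      _ ≤ _ := by gcongr
  have hx : ‖x‖ ≤ ‖x + y‖ + h := by
    have h3 : ‖x + y - y‖ ≤ ‖x + y‖ + ‖y‖ := norm_sub_le _ _
    rw [add_sub_cancel_right] at h3
    linarith
  have hexp : -‖x + y‖ ^ 2 / (2 * t) ≤ t / 2 + -‖x‖ ^ 2 / (2 * (t + h)) := by
    generalize ‖x + y‖ = a at hx
    have hb : ‖x‖ ^ 2 ≤ (a + h) ^ 2 := pow_le_pow_left₀ (norm_nonneg x) hx 2
    have h4 : ‖x‖ ^ 2 / (2 * (t + h)) ≤ a ^ 2 / (2 * t) + h / 2 := by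
      have h5 : a ^ 2 / (2 * t) + h / 2 - (a + h) ^ 2 / (2 * (t + h))
          = h * (a - t) ^ 2 / (2 * t * (t + h)) := by
        field_simp
        ring
      have h6 : 0 ≤ h * (a - t) ^ 2 / (2 * t * (t + h)) := by positivity
      have h7 : ‖x‖ ^ 2 / (2 * (t + h)) ≤ (a + h) ^ 2 / (2 * (t + h)) := by gcongr
      linarith
    rw [neg_div, neg_div]
    linarith
  calc _ ≤ ((2 : ℝ) ^ ((d : ℝ) / 2) * (2 * Real.pi * (t + h)) ^ (-(d : ℝ) / 2))
        * Real.exp (t / 2 + -‖x‖ ^ 2 / (2 * (t + h))) := by gcongr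
    _ = _ := by rw [Real.exp_add]; ring
end

section
/- Let μ be a σ-finite Borel measure on ℝ^d. Then the following are equivalent: (a) μ p_t < ∞ for every t > 0; (b) for every t > 0, the measure on ℝ^d with density x ↦ (μ * p_t)(x) with respect to Lebesgue measure is locally finite, i.e. assigns finite mass to every bounded Borel set. -/
open Filter MeasureTheory

lemma gaussDensity_le_aux (d : ℕ) (t R : ℝ) (ht : 0 < t) (a b : EuclideanSpace ℝ (Fin d))
    (h : ‖b‖ ≤ ‖a‖ + R) :
    ENNReal.ofReal (gaussDensity d t a) ≤
      ENNReal.ofReal ((2 * Real.pi * t) ^ (-(d : ℝ) / 2) *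
        ((2 * Real.pi * (2 * t)) ^ (-(d : ℝ) / 2))⁻¹ * Real.exp (R ^ 2 / (2 * t))) *
        ENNReal.ofReal (gaussDensity d (2 * t) b) := by
  have hpi := Real.pi_pos
  rw [← ENNReal.ofReal_mul (by positivity)]
  apply ENNReal.ofReal_le_ofReal
  unfold gaussDensity
  have hc : 0 < (2 * Real.pi * (2 * t)) ^ (-(d : ℝ) / 2) := by positivity
  have hc0 : 0 < (2 * Real.pi * t) ^ (-(d : ℝ) / 2) := by positivity
  generalize (2 * Real.pi * (2 * t)) ^ (-(d : ℝ) / 2) = c at *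
  generalize (2 * Real.pi * t) ^ (-(d : ℝ) / 2) = c0 at *
  have e : c0 * c⁻¹ * Real.exp (R ^ 2 / (2 * t)) * (c * Real.exp (-‖b‖ ^ 2 / (2 * (2 * t))))
      = c0 * Real.exp (R ^ 2 / (2 * t) + -‖b‖ ^ 2 / (2 * (2 * t))) := by
    rw [Real.exp_add]
    field_simp
  rw [e]
  apply mul_le_mul_of_nonneg_left _ hc0.le
  apply Real.exp_le_exp.mpr
  have hb : ‖b‖ ^ 2 ≤ 2 * ‖a‖ ^ 2 + 2 * R ^ 2 := by
    have := pow_le_pow_left₀ (norm_nonneg b) h 2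
    nlinarith [sq_nonneg (‖a‖ - R)]
  have e2 : R ^ 2 / (2 * t) + -‖b‖ ^ 2 / (2 * (2 * t)) - -‖a‖ ^ 2 / (2 * t)
      = (2 * ‖a‖ ^ 2 + 2 * R ^ 2 - ‖b‖ ^ 2) / (4 * t) := by
    field_simp
    ring
  have : 0 ≤ (2 * ‖a‖ ^ 2 + 2 * R ^ 2 - ‖b‖ ^ 2) / (4 * t) :=
    div_nonneg (by linarith) (by positivity)
  linarith

/-- For a σ-finite Borel measure `μ` on `ℝ^d`, the condition `μ p_t < ∞` for all `t > 0`
is equivalent to the local finiteness (finiteness on all bounded Borel sets) of the measure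
with Lebesgue density `x ↦ (μ * p_t)(x)`, for every `t > 0`. -/
theorem gaussMoment_iff_locallyFinite (d : ℕ)
    (μ : Measure (EuclideanSpace ℝ (Fin d))) [SigmaFinite μ] :
    (∀ t : ℝ, 0 < t → ∫⁻ u, ENNReal.ofReal (gaussDensity d t u) ∂μ < ⊤) ↔
    (∀ t : ℝ, 0 < t → ∀ B : Set (EuclideanSpace ℝ (Fin d)), MeasurableSet B →
      Bornology.IsBounded B →
      ∫⁻ x in B, (∫⁻ u, ENNReal.ofReal (gaussDensity d t (x - u)) ∂μ) ∂volume < ⊤) := by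
  constructor
  · intro H t ht B hB hbd
    obtain ⟨R, hR⟩ := hbd.exists_norm_le
    set C := (2 * Real.pi * t) ^ (-(d : ℝ) / 2) *
        ((2 * Real.pi * (2 * t)) ^ (-(d : ℝ) / 2))⁻¹ * Real.exp (R ^ 2 / (2 * t)) with hC
    have key : ∀ x ∈ B, (∫⁻ u, ENNReal.ofReal (gaussDensity d t (x - u)) ∂μ) ≤
        ENNReal.ofReal C * ∫⁻ u, ENNReal.ofReal (gaussDensity d (2 * t) u) ∂μ := by
      intro x hx
      rw [← lintegral_const_mul' _ _ ENNReal.ofReal_ne_top]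
      refine lintegral_mono fun u => gaussDensity_le_aux d t R ht _ _ ?_
      have h1 := norm_sub_norm_le u x
      have h2 := hR x hx
      rw [norm_sub_rev x u]
      linarith
    refine (setLIntegral_mono' hB key).trans_lt ?_
    rw [setLIntegral_const]
    exact ENNReal.mul_lt_top (ENNReal.mul_lt_top ENNReal.ofReal_lt_top (H (2 * t) (by positivity)))
      hbd.measure_lt_top
  · intro H t ht
    set C := (2 * Real.pi * t) ^ (-(d : ℝ) / 2) *
        ((2 * Real.pi * (2 * t)) ^ (-(d : ℝ) / 2))⁻¹ * Real.exp (1 ^ 2 / (2 * t)) with hC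
    have key : ∀ x ∈ Metric.ball (0 : EuclideanSpace ℝ (Fin d)) 1,
        (∫⁻ u, ENNReal.ofReal (gaussDensity d t u) ∂μ) ≤
        ENNReal.ofReal C * ∫⁻ u, ENNReal.ofReal (gaussDensity d (2 * t) (x - u)) ∂μ := by
      intro x hx
      rw [← lintegral_const_mul' _ _ ENNReal.ofReal_ne_top]
      refine lintegral_mono fun u => gaussDensity_le_aux d t 1 ht _ _ ?_
      have h1 := norm_sub_le x u
      have h2 := mem_ball_zero_iff.mp hx
      linarith
    have h3 := setLIntegral_mono' (μ := volume) Metric.isOpen_ball.measurableSet key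
    rw [setLIntegral_const, lintegral_const_mul' _ _ ENNReal.ofReal_ne_top] at h3
    have h4 := h3.trans_lt (ENNReal.mul_lt_top ENNReal.ofReal_lt_top
      (H (2 * t) (by positivity) _ Metric.isOpen_ball.measurableSet Metric.isBounded_ball))
    exact ENNReal.lt_top_of_mul_ne_top_left h4.ne
      (Metric.measure_ball_pos volume _ one_pos).ne'
end

section
/- For every d ≥ 3 there exists a constant C depending only on d such that for every σ-finite Borel measure μ on ℝ^d, every t > 0, and all x₁ ≠ x₂ in ℝ^d, writing x̄ = (x₁ + x₂)/2 and r = (x₁ - x₂)/2, one has (μ * q_t)(x₁, x₂) ≤ C · (μ * p_t)(x̄) · p_t(r) · |r|^{2-d} · t^{d/2}. -/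
open Filter MeasureTheory

/-- The covariance density
`q_t(x₁, x₂) = 2 ∫₀^t ∫ p_s(u) p_{t-s}(x₁ - u) p_{t-s}(x₂ - u) du ds`. -/
noncomputable def gaussQ (d : ℕ) (t : ℝ) (x₁ x₂ : EuclideanSpace ℝ (Fin d)) : ℝ :=
  2 * ∫ s in Set.Ioc (0:ℝ) t,
      ∫ u, gaussDensity d s u * gaussDensity d (t - s) (x₁ - u)
        * gaussDensity d (t - s) (x₂ - u) ∂volume

lemma heat_key (m c : ℝ) (hm : 1 < m) (hc : 0 < c) :
    IntegrableOn (fun τ : ℝ => τ ^ (-m) * Real.exp (-c / τ)) (Set.Ioi 0) ∧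
    ∫ τ in Set.Ioi (0:ℝ), τ ^ (-m) * Real.exp (-c / τ) = (1 / c) ^ (m - 1) * Real.Gamma (m - 1) := by
  have h1 := Real.integral_rpow_mul_exp_neg_mul_Ioi (a := m - 1) (r := c) (by linarith) hc
  rw [← integral_comp_rpow_Ioi _ (p := -1) (by norm_num)] at h1
  have h2 : ∫ τ in Set.Ioi (0:ℝ), τ ^ (-m) * Real.exp (-c / τ)
      = (1 / c) ^ (m - 1) * Real.Gamma (m - 1) := by
    rw [← h1]
    refine setIntegral_congr_fun measurableSet_Ioi fun x hx => ?_
    have hx : 0 < x := hx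
    simp only [smul_eq_mul, abs_neg, abs_one, one_mul]
    rw [← Real.rpow_mul hx.le, ← mul_assoc, ← Real.rpow_add hx, Real.rpow_neg_one]
    congr 2
    · ring
    · ring
  refine ⟨?_, h2⟩
  refine .of_integral_ne_zero ?_
  rw [h2]
  have := Real.Gamma_pos_of_pos (s := m - 1) (by linarith)
  positivity

lemma heat_exponent {d : ℕ} (s τ : ℝ) (hs : 0 < s) (hτ : 0 < τ)
    (y₁ y₂ u : EuclideanSpace ℝ (Fin d)) :
    -‖u‖ ^ 2 / (2 * s) + -‖y₁ - u‖ ^ 2 / (2 * τ) + -‖y₂ - u‖ ^ 2 / (2 * τ)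
    = -‖(2:ℝ)⁻¹ • (y₁ - y₂)‖ ^ 2 / τ + -‖(2:ℝ)⁻¹ • (y₁ + y₂)‖ ^ 2 / (2 * s + τ)
      + -((2 * s + τ) / (2 * s * τ)) *
        ‖u - (2 * s / (2 * s + τ)) • ((2:ℝ)⁻¹ • (y₁ + y₂))‖ ^ 2 := by
  set y := (2:ℝ)⁻¹ • (y₁ + y₂) with hy
  set ρ := (2:ℝ)⁻¹ • (y₁ - y₂) with hρ
  have e1 : y₁ - u = (y - u) + ρ := by rw [hy, hρ]; module
  have e2 : y₂ - u = (y - u) - ρ := by rw [hy, hρ]; module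
  have n1 := norm_add_sq_real (y - u) ρ
  have n2 := norm_sub_sq_real (y - u) ρ
  have n3 := norm_sub_sq_real y u
  have n4 := norm_sub_sq_real u ((2 * s / (2 * s + τ)) • y)
  rw [norm_smul, inner_smul_right, mul_pow, Real.norm_eq_abs, sq_abs, real_inner_comm] at n4
  rw [e1, e2, n1, n2, n4, n3]
  field_simp
  ring

lemma heat_inner {d : ℕ} (s τ : ℝ) (hs : 0 < s) (hτ : 0 < τ)
    (y₁ y₂ : EuclideanSpace ℝ (Fin d)) :
    ∫ u, gaussDensity d s u * gaussDensity d τ (y₁ - u) * gaussDensity d τ (y₂ - u) ∂volume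
    ≤ gaussDensity d (s + τ) ((2:ℝ)⁻¹ • (y₁ + y₂)) * ((2 * Real.pi) ^ (-(d:ℝ) / 2) *
      Real.exp (-‖(2:ℝ)⁻¹ • (y₁ - y₂)‖ ^ 2 / (2 * (s + τ)))) *
      (τ ^ (-((d:ℝ) / 2)) * Real.exp (-(‖(2:ℝ)⁻¹ • (y₁ - y₂)‖ ^ 2 / 2) / τ)) := by
  have hpi := Real.pi_pos
  set m : ℝ := (d:ℝ) / 2 with hm
  have hm0 : 0 ≤ m := by positivity
  have hmd : -(d:ℝ) / 2 = -m := by rw [hm]; ring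
  have hk : 0 < (2 * s + τ) / (2 * s * τ) := by positivity
  have hI : ∀ u : EuclideanSpace ℝ (Fin d),
      gaussDensity d s u * gaussDensity d τ (y₁ - u) * gaussDensity d τ (y₂ - u) =
      ((2 * Real.pi * s) ^ (-m) * (2 * Real.pi * τ) ^ (-m) * (2 * Real.pi * τ) ^ (-m) *
      (Real.exp (-‖(2:ℝ)⁻¹ • (y₁ - y₂)‖ ^ 2 / τ) *
       Real.exp (-‖(2:ℝ)⁻¹ • (y₁ + y₂)‖ ^ 2 / (2 * s + τ)))) *
      Real.exp (-((2 * s + τ) / (2 * s * τ)) *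
        ‖u - (2 * s / (2 * s + τ)) • ((2:ℝ)⁻¹ • (y₁ + y₂))‖ ^ 2) := by
    intro u
    have h := congrArg Real.exp (heat_exponent s τ hs hτ y₁ y₂ u)
    simp only [Real.exp_add] at h
    unfold gaussDensity
    rw [hmd, mul_assoc _ (Real.exp _ * Real.exp _), ← h]
    ring
  simp_rw [hI]
  rw [integral_const_mul, integral_sub_right_eq_self
    (fun u : EuclideanSpace ℝ (Fin d) => Real.exp (-((2 * s + τ) / (2 * s * τ)) * ‖u‖ ^ 2)),
    GaussianFourier.integral_rexp_neg_mul_sq_norm hk, finrank_euclideanSpace_fin, ← hm]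
  unfold gaussDensity
  rw [hmd]
  generalize ‖(2:ℝ)⁻¹ • (y₁ + y₂)‖ = Y
  generalize ‖(2:ℝ)⁻¹ • (y₁ - y₂)‖ = R
  have hconst : (2 * Real.pi * s) ^ (-m) * (2 * Real.pi * τ) ^ (-m) * (2 * Real.pi * τ) ^ (-m) *
      (Real.pi / ((2 * s + τ) / (2 * s * τ))) ^ m ≤
      (2 * Real.pi * (s + τ)) ^ (-m) * (2 * Real.pi) ^ (-m) * τ ^ (-m) := by
    have e : (2 * Real.pi * s) ^ (-m) * (2 * Real.pi * τ) ^ (-m) * (2 * Real.pi * τ) ^ (-m) *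
      (Real.pi / ((2 * s + τ) / (2 * s * τ))) ^ m =
      (2 * Real.pi * (2 * s + τ)) ^ (-m) * (2 * Real.pi) ^ (-m) * τ ^ (-m) := by
      rw [← neg_neg m, Real.rpow_neg (x := Real.pi / _) (by positivity), neg_neg,
        ← Real.inv_rpow (by positivity)]
      rw [← Real.mul_rpow (by positivity) (by positivity),
        ← Real.mul_rpow (by positivity) (by positivity),
        ← Real.mul_rpow (by positivity) (by positivity),
        ← Real.mul_rpow (by positivity) (by positivity),
        ← Real.mul_rpow (by positivity) (by positivity)]
      congr 1
      field_simp
    rw [e]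
    gcongr ?_ * _ * _
    exact Real.rpow_le_rpow_of_nonpos (by positivity) (by gcongr; linarith) (by linarith)
  have hY : Real.exp (-Y ^ 2 / (2 * s + τ)) ≤ Real.exp (-Y ^ 2 / (2 * (s + τ))) := by
    apply Real.exp_le_exp.2
    rw [neg_div, neg_div]
    apply neg_le_neg
    gcongr
    linarith
  have hR : Real.exp (-R ^ 2 / τ) ≤
      Real.exp (-R ^ 2 / (2 * (s + τ))) * Real.exp (-(R ^ 2 / 2) / τ) := by
    rw [← Real.exp_add]
    apply Real.exp_le_exp.2
    have : R ^ 2 / (2 * (s + τ)) ≤ R ^ 2 / (2 * τ) := by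
      gcongr
      linarith
    have e : R ^ 2 / τ = R ^ 2 / (2 * τ) + R ^ 2 / 2 / τ := by field_simp; ring
    rw [neg_div, neg_div, neg_div, e]
    linarith
  calc _ = ((2 * Real.pi * s) ^ (-m) * (2 * Real.pi * τ) ^ (-m) * (2 * Real.pi * τ) ^ (-m) *
      (Real.pi / ((2 * s + τ) / (2 * s * τ))) ^ m) *
      (Real.exp (-R ^ 2 / τ) * Real.exp (-Y ^ 2 / (2 * s + τ))) := by ring
    _ ≤ ((2 * Real.pi * (s + τ)) ^ (-m) * (2 * Real.pi) ^ (-m) * τ ^ (-m)) *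
      ((Real.exp (-R ^ 2 / (2 * (s + τ))) * Real.exp (-(R ^ 2 / 2) / τ)) *
        Real.exp (-Y ^ 2 / (2 * (s + τ)))) := by gcongr
    _ = _ := by ring

lemma gaussDensity_nonneg (d : ℕ) {t : ℝ} (ht : 0 ≤ t) (x : EuclideanSpace ℝ (Fin d)) :
    0 ≤ gaussDensity d t x := by
  have hpi := Real.pi_pos
  unfold gaussDensity
  positivity

lemma gaussQ_bound (d : ℕ) (hd : 3 ≤ d) (t : ℝ) (ht : 0 < t)
    (y₁ y₂ : EuclideanSpace ℝ (Fin d)) (hne : y₁ ≠ y₂) :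
    gaussQ d t y₁ y₂ ≤ (2 ^ ((d:ℝ) / 2) * Real.Gamma ((d:ℝ) / 2 - 1)) *
      gaussDensity d t ((2:ℝ)⁻¹ • (y₁ + y₂)) *
      (gaussDensity d t ((2:ℝ)⁻¹ • (y₁ - y₂))
              * ‖(2:ℝ)⁻¹ • (y₁ - y₂)‖ ^ ((2:ℝ) - d) * t ^ ((d:ℝ) / 2)) := by
  have hpi := Real.pi_pos
  have hd' : (3:ℝ) ≤ d := by exact_mod_cast hd
  have hR : 0 < ‖(2:ℝ)⁻¹ • (y₁ - y₂)‖ := by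
    rw [norm_pos_iff]
    exact smul_ne_zero (by norm_num) (sub_ne_zero.2 hne)
  have hin := fun s hs hs' => heat_inner (d := d) s (t - s) hs hs' y₁ y₂
  set R := ‖(2:ℝ)⁻¹ • (y₁ - y₂)‖ with hRdef
  obtain ⟨hi, hv⟩ := heat_key ((d:ℝ) / 2) (R ^ 2 / 2) (by linarith) (by positivity)
  set h : ℝ → ℝ := fun τ => τ ^ (-((d:ℝ) / 2)) * Real.exp (-(R ^ 2 / 2) / τ) with hh
  have hi0 : IntervalIntegrable h volume 0 t :=
    (intervalIntegrable_iff_integrableOn_Ioc_of_le ht.le).2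
      (hi.mono_set Set.Ioc_subset_Ioi_self)
  have hi1 : IntegrableOn (fun s => h (t - s)) (Set.Ioc 0 t) := by
    have := (hi0.comp_sub_left t).symm
    rw [sub_self, sub_zero] at this
    exact (intervalIntegrable_iff_integrableOn_Ioc_of_le ht.le).1 this
  have hv1 : ∫ s in Set.Ioc 0 t, h (t - s) ≤ ∫ s in Set.Ioi 0, h s := by
    rw [← intervalIntegral.integral_of_le ht.le, intervalIntegral.integral_comp_sub_left h,
      sub_self, sub_zero, intervalIntegral.integral_of_le ht.le]
    refine setIntegral_mono_set hi ?_ (Set.Ioc_subset_Ioi_self).eventuallyLE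
    refine (ae_restrict_iff' measurableSet_Ioi).2 (ae_of_all _ fun x hx => ?_)
    have hx : 0 < x := hx
    simp only [hh, Pi.zero_apply]
    positivity
  set P := gaussDensity d t ((2:ℝ)⁻¹ • (y₁ + y₂)) with hP
  have hP0 : 0 ≤ P := gaussDensity_nonneg d ht.le _
  set K := P * ((2 * Real.pi) ^ (-(d:ℝ) / 2) * Real.exp (-R ^ 2 / (2 * t))) with hK
  have hK0 : 0 ≤ K := by positivity
  have hmain : ∫ s in Set.Ioc (0:ℝ) t, ∫ u, gaussDensity d s u * gaussDensity d (t - s) (y₁ - u)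
        * gaussDensity d (t - s) (y₂ - u) ∂volume ≤ ∫ s in Set.Ioc (0:ℝ) t, K * h (t - s) := by
    have hae : ∀ᵐ s ∂(volume.restrict (Set.Ioc (0:ℝ) t)), 0 < s ∧ s < t := by
      rw [← Measure.restrict_congr_set Ioo_ae_eq_Ioc]
      exact (ae_restrict_iff' measurableSet_Ioo).2 (ae_of_all _ fun x hx => hx)
    refine integral_mono_of_nonneg ?_ (hi1.const_mul K) ?_
    · filter_upwards [hae] with s hs
      refine integral_nonneg fun u => ?_
      have a1 := gaussDensity_nonneg d hs.1.le u
      have a2 := gaussDensity_nonneg d (sub_pos.2 hs.2).le (y₁ - u)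
      have a3 := gaussDensity_nonneg d (sub_pos.2 hs.2).le (y₂ - u)
      exact mul_nonneg (mul_nonneg a1 a2) a3
    · filter_upwards [hae] with s hs
      have := hin s hs.1 (sub_pos.2 hs.2)
      rwa [add_sub_cancel] at this
  rw [integral_const_mul] at hmain
  have hfin : gaussQ d t y₁ y₂ ≤ 2 * (K * ((1 / (R ^ 2 / 2)) ^ ((d:ℝ) / 2 - 1) *
      Real.Gamma ((d:ℝ) / 2 - 1))) := by
    unfold gaussQ
    have := mul_le_mul_of_nonneg_left (hv1.trans_eq hv) hK0
    linarith
  refine hfin.trans_eq ?_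
  have e1 : (1 / (R ^ 2 / 2)) ^ ((d:ℝ) / 2 - 1) = 2 ^ ((d:ℝ) / 2) / 2 * R ^ ((2:ℝ) - d) := by
    rw [one_div_div, Real.div_rpow (by norm_num) (by positivity), Real.rpow_sub_one (by norm_num),
      ← Real.rpow_natCast R 2, ← Real.rpow_mul hR.le, div_eq_mul_inv _ (R ^ _),
      ← Real.rpow_neg hR.le]
    congr 2
    push_cast
    ring
  have e2 : gaussDensity d t ((2:ℝ)⁻¹ • (y₁ - y₂)) * t ^ ((d:ℝ) / 2) =
      (2 * Real.pi) ^ (-(d:ℝ) / 2) * Real.exp (-R ^ 2 / (2 * t)) := by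
    unfold gaussDensity
    rw [← hRdef, Real.mul_rpow (by positivity) ht.le]
    have : t ^ (-(d:ℝ) / 2) * t ^ ((d:ℝ) / 2) = 1 := by
      rw [← Real.rpow_add ht, neg_div, neg_add_cancel, Real.rpow_zero]
    linear_combination ((2 * Real.pi) ^ (-(d:ℝ) / 2) * Real.exp (-R ^ 2 / (2 * t))) * this
  rw [e1, hK, ← e2]
  ring

/-- **Lemma 3.3(ii).** For `d ≥ 3` there is a constant `C` depending only on `d` such that
for every σ-finite `μ`, every `t > 0` and all `x₁ ≠ x₂`, with `x̄ = (x₁+x₂)/2`,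
`r = (x₁-x₂)/2`: `(μ * q_t)(x₁, x₂) ≤ C (μ * p_t)(x̄) p_t(r) |r|^{2-d} t^{d/2}`. -/
theorem gaussQ_conv_bound_high_dim (d : ℕ) (hd : 3 ≤ d) :
    ∃ C : ℝ, 0 < C ∧
      ∀ (μ : Measure (EuclideanSpace ℝ (Fin d))), SigmaFinite μ →
      ∀ t : ℝ, 0 < t → ∀ x₁ x₂ : EuclideanSpace ℝ (Fin d), x₁ ≠ x₂ →
      ∫⁻ u, ENNReal.ofReal (gaussQ d t (x₁ - u) (x₂ - u)) ∂μ ≤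
        ENNReal.ofReal C
          * (∫⁻ u, ENNReal.ofReal (gaussDensity d t ((2:ℝ)⁻¹ • (x₁ + x₂) - u)) ∂μ)
          * ENNReal.ofReal (gaussDensity d t ((2:ℝ)⁻¹ • (x₁ - x₂))
              * ‖(2:ℝ)⁻¹ • (x₁ - x₂)‖ ^ ((2:ℝ) - d) * t ^ ((d:ℝ) / 2)) := by
  have hd' : (3:ℝ) ≤ d := by exact_mod_cast hd
  have hG := Real.Gamma_pos_of_pos (s := (d:ℝ) / 2 - 1) (by linarith)
  have hC : 0 < 2 ^ ((d:ℝ) / 2) * Real.Gamma ((d:ℝ) / 2 - 1) := by positivity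
  refine ⟨_, hC, ?_⟩
  intro μ _ t ht x₁ x₂ hne
  set C := 2 ^ ((d:ℝ) / 2) * Real.Gamma ((d:ℝ) / 2 - 1)
  set B := gaussDensity d t ((2:ℝ)⁻¹ • (x₁ - x₂))
              * ‖(2:ℝ)⁻¹ • (x₁ - x₂)‖ ^ ((2:ℝ) - d) * t ^ ((d:ℝ) / 2) with hB
  rw [← lintegral_const_mul' _ _ ENNReal.ofReal_ne_top,
    ← lintegral_mul_const' _ _ ENNReal.ofReal_ne_top]
  refine lintegral_mono fun u => ?_
  have hp := gaussDensity_nonneg d ht.le ((2:ℝ)⁻¹ • (x₁ + x₂) - u)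
  simp only []
  rw [← ENNReal.ofReal_mul hC.le, ← ENNReal.ofReal_mul (mul_nonneg hC.le hp)]
  apply ENNReal.ofReal_le_ofReal
  have h := gaussQ_bound d hd t ht (x₁ - u) (x₂ - u) (fun h => hne (sub_left_injective h))
  have e1 : (2:ℝ)⁻¹ • (x₁ - u + (x₂ - u)) = (2:ℝ)⁻¹ • (x₁ + x₂) - u := by module
  have e2 : x₁ - u - (x₂ - u) = x₁ - x₂ := by abel
  rw [e1, e2] at h
  exact h
end

section
/- There exists an absolute constant C > 0 such that for every σ-finite Borel measure μ on ℝ², every t > 0, and all x₁ ≠ x₂ in ℝ², writing x̄ = (x₁ + x₂)/2 and r = (x₁ - x₂)/2, one has (μ * q_t)(x₁, x₂) ≤ C · (μ * p_t)(x̄) · ( t · p_{t/2}(r) + log₊(t/|r|²) ), where log₊ a = max(log a, 0). -/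
open Filter MeasureTheory

theorem aux_gd (t : ℝ) (ht : 0 ≤ t) (x : EuclideanSpace ℝ (Fin 2)) :
    gaussDensity 2 t x = (2 * Real.pi * t)⁻¹ * Real.exp (-‖x‖ ^ 2 / (2 * t)) := by
  unfold gaussDensity
  have : (-((2:ℕ) : ℝ) / 2) = -1 := by norm_num
  rw [this, Real.rpow_neg_one]

theorem aux_gauss (b c : ℝ) (hb : 0 < b) (w : EuclideanSpace ℝ (Fin 2)) :
    ∫ v : EuclideanSpace ℝ (Fin 2), Real.exp (-b * ‖v‖ ^ 2 + c * inner ℝ w v)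
      = Real.pi / b * Real.exp (c ^ 2 * ‖w‖ ^ 2 / (4 * b)) := by
  have h := GaussianFourier.integral_cexp_neg_mul_sq_norm_add_of_euclideanSpace
    (b := (b : ℂ)) (by simpa using hb) (c : ℂ) w
  have e : ((Fintype.card (Fin 2) : ℂ) / 2) = 1 := by simp
  rw [e, Complex.cpow_one] at h
  apply Complex.ofReal_injective
  rw [← integral_complex_ofReal]
  push_cast
  exact h

theorem aux_inner (s a : ℝ) (hs : 0 < s) (ha : 0 < a) (x₁ x₂ : EuclideanSpace ℝ (Fin 2)) :
    ∫ u, gaussDensity 2 s u * gaussDensity 2 a (x₁ - u) * gaussDensity 2 a (x₂ - u) ∂volume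
      = (4 * Real.pi ^ 2 * a * (a + 2 * s))⁻¹
        * Real.exp (-‖(2:ℝ)⁻¹ • (x₁ + x₂)‖ ^ 2 / (a + 2 * s))
        * Real.exp (-‖(2:ℝ)⁻¹ • (x₁ - x₂)‖ ^ 2 / a) := by
  set xb := (2:ℝ)⁻¹ • (x₁ + x₂) with hxb
  set r := (2:ℝ)⁻¹ • (x₁ - x₂) with hr
  have h1 : x₁ = xb + r := by rw [hxb, hr]; module
  have h2 : x₂ = xb - r := by rw [hxb, hr]; module
  have hpi := Real.pi_pos
  have hb : 0 < (a + 2 * s) / (2 * s * a) := by positivity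
  have key : ∀ u : EuclideanSpace ℝ (Fin 2),
      gaussDensity 2 s u * gaussDensity 2 a (x₁ - u) * gaussDensity 2 a (x₂ - u)
      = ((2 * Real.pi * s)⁻¹ * (2 * Real.pi * a)⁻¹ * (2 * Real.pi * a)⁻¹
          * Real.exp (-(‖xb‖ ^ 2 + ‖r‖ ^ 2) / a))
        * Real.exp (-((a + 2 * s) / (2 * s * a)) * ‖u‖ ^ 2 + (2 / a) * inner ℝ xb u) := by
    intro u
    rw [aux_gd _ hs.le, aux_gd _ ha.le, aux_gd _ ha.le]
    have e1 : ‖x₁ - u‖ ^ 2 + ‖x₂ - u‖ ^ 2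
        = 2 * ‖xb‖ ^ 2 + 2 * ‖r‖ ^ 2 + 2 * ‖u‖ ^ 2 - 4 * inner ℝ xb u := by
      have := parallelogram_law_with_norm ℝ (xb - u) r
      have h3 := norm_sub_sq_real xb u
      have e : x₁ - u = xb - u + r := by rw [h1]; abel
      have e' : x₂ - u = xb - u - r := by rw [h2]; abel
      rw [e, e']
      nlinarith
    have e2 : -‖u‖ ^ 2 / (2 * s) + -‖x₁ - u‖ ^ 2 / (2 * a) + -‖x₂ - u‖ ^ 2 / (2 * a)
        = -(‖xb‖ ^ 2 + ‖r‖ ^ 2) / a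
          + (-((a + 2 * s) / (2 * s * a)) * ‖u‖ ^ 2 + (2 / a) * inner ℝ xb u) := by
      have : ‖x₁ - u‖ ^ 2 = 2 * ‖xb‖ ^ 2 + 2 * ‖r‖ ^ 2 + 2 * ‖u‖ ^ 2 - 4 * inner ℝ xb u
        - ‖x₂ - u‖ ^ 2 := by linarith
      rw [this]
      field_simp
      ring
    calc _ = (2 * Real.pi * s)⁻¹ * (2 * Real.pi * a)⁻¹ * (2 * Real.pi * a)⁻¹ *
          Real.exp (-‖u‖ ^ 2 / (2 * s) + -‖x₁ - u‖ ^ 2 / (2 * a) + -‖x₂ - u‖ ^ 2 / (2 * a)) := by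
            rw [Real.exp_add, Real.exp_add]; ring
      _ = _ := by rw [e2, Real.exp_add]; ring
  simp_rw [key]
  rw [integral_const_mul, aux_gauss _ _ hb]
  have e3 : -(‖xb‖ ^ 2 + ‖r‖ ^ 2) / a + (2 / a) ^ 2 * ‖xb‖ ^ 2 / (4 * ((a + 2 * s) / (2 * s * a)))
      = -‖xb‖ ^ 2 / (a + 2 * s) + -‖r‖ ^ 2 / a := by
    field_simp
    ring
  calc _ = ((2 * Real.pi * s)⁻¹ * (2 * Real.pi * a)⁻¹ * (2 * Real.pi * a)⁻¹
        * (Real.pi / ((a + 2 * s) / (2 * s * a)))) * Real.exp (-(‖xb‖ ^ 2 + ‖r‖ ^ 2) / a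
        + (2 / a) ^ 2 * ‖xb‖ ^ 2 / (4 * ((a + 2 * s) / (2 * s * a)))) := by
          rw [Real.exp_add]; ring
    _ = (4 * Real.pi ^ 2 * a * (a + 2 * s))⁻¹ *
        Real.exp (-(‖xb‖ ^ 2 + ‖r‖ ^ 2) / a
        + (2 / a) ^ 2 * ‖xb‖ ^ 2 / (4 * ((a + 2 * s) / (2 * s * a)))) := by
          congr 1; field_simp; ring
    _ = _ := by rw [e3, Real.exp_add]; ring

theorem aux_cont (ρ t : ℝ) :
    ContinuousOn (fun a : ℝ => expNegInvGlue (a / ρ)) (Set.Icc 0 t) := by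
  have h := (expNegInvGlue.contDiff (n := 0)).continuous
  fun_prop

theorem aux_deriv (ρ t : ℝ) (hρ : 0 < ρ) : ∀ a ∈ Set.Ioo 0 t,
    HasDerivAt (fun a : ℝ => expNegInvGlue (a / ρ)) (ρ / a ^ 2 * Real.exp (-ρ / a)) a := by
  intro a ha
  have h0 : HasDerivAt (fun a : ℝ => Real.exp (-ρ / a)) (ρ / a ^ 2 * Real.exp (-ρ / a)) a := by
    have := ((hasDerivAt_inv ha.1.ne').const_mul (-ρ)).exp
    convert this using 1
    simp only [div_eq_mul_inv]
    ring
  refine h0.congr_of_eventuallyEq ?_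
  filter_upwards [lt_mem_nhds ha.1] with b hb
  have : 0 < b / ρ := by positivity
  simp [expNegInvGlue, not_le.2 this, neg_div]

theorem aux_int1 (ρ t : ℝ) (hρ : 0 < ρ) (ht : 0 < t) :
    IntervalIntegrable (fun a : ℝ => ρ / a ^ 2 * Real.exp (-ρ / a)) volume 0 t ∧
    ∫ a in (0:ℝ)..t, ρ / a ^ 2 * Real.exp (-ρ / a) = Real.exp (-ρ / t) := by
  have hi : IntervalIntegrable (fun a : ℝ => ρ / a ^ 2 * Real.exp (-ρ / a)) volume 0 t := by
    rw [intervalIntegrable_iff_integrableOn_Ioc_of_le ht.le]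
    exact intervalIntegral.integrableOn_deriv_of_nonneg (aux_cont ρ t) (aux_deriv ρ t hρ)
      (fun a _ => by positivity)
  refine ⟨hi, ?_⟩
  rw [intervalIntegral.integral_eq_sub_of_hasDerivAt_of_le ht.le (aux_cont ρ t)
    (aux_deriv ρ t hρ) hi]
  have : 0 < t / ρ := by positivity
  simp [expNegInvGlue, not_le.2 this, neg_div]

theorem aux_int2 (ρ t : ℝ) (hρ : 0 < ρ) (ht : 0 < t) :
    IntervalIntegrable (fun a : ℝ => (ρ + a)⁻¹) volume 0 t ∧
    ∫ a in (0:ℝ)..t, (ρ + a)⁻¹ = Real.log ((ρ + t) / ρ) := by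
  constructor
  · apply ContinuousOn.intervalIntegrable
    apply ContinuousOn.inv₀ (by fun_prop)
    intro a ha
    rw [Set.uIcc_of_le ht.le] at ha
    have := ha.1
    positivity
  · rw [intervalIntegral.integral_comp_add_left (fun a => a⁻¹) ρ,
      integral_inv_of_pos (by linarith) (by linarith), add_zero]

theorem aux_q (t K : ℝ) (ht : 0 < t) (x₁ x₂ : EuclideanSpace ℝ (Fin 2))
    (h : ℝ → ℝ) (hi : IntervalIntegrable h volume 0 t) (h0 : ∀ a, 0 ≤ a → 0 ≤ h a)
    (hK : ∫ a in (0:ℝ)..t, h a = K)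
    (hb : ∀ a, 0 < a → a ≤ t → a⁻¹ * Real.exp (-‖(2:ℝ)⁻¹ • (x₁ - x₂)‖ ^ 2 / a) ≤ h a) :
    gaussQ 2 t x₁ x₂ ≤ gaussDensity 2 t ((2:ℝ)⁻¹ • (x₁ + x₂)) * (Real.pi⁻¹ * K) := by
  have hpi := Real.pi_pos
  set P := gaussDensity 2 t ((2:ℝ)⁻¹ • (x₁ + x₂)) with hP
  have hP0 : 0 ≤ P := by rw [hP, aux_gd _ ht.le]; positivity
  have hi' : IntervalIntegrable (fun s => h (t - s)) volume 0 t := by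
    have := hi.comp_sub_left t
    simpa using this.symm
  have hK' : ∫ s in (0:ℝ)..t, h (t - s) = K := by
    rw [intervalIntegral.integral_comp_sub_left]; simpa using hK
  have main : (∫ s in Set.Ioc (0:ℝ) t,
      ∫ u, gaussDensity 2 s u * gaussDensity 2 (t - s) (x₁ - u)
        * gaussDensity 2 (t - s) (x₂ - u) ∂volume)
      ≤ ∫ s in Set.Ioc (0:ℝ) t, P * (2 * Real.pi)⁻¹ * h (t - s) := by
    apply integral_mono_of_nonneg
    · filter_upwards [ae_restrict_mem measurableSet_Ioc] with s hs
      apply integral_nonneg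
      intro u
      have h1 : 0 ≤ t - s := by linarith [hs.2]
      have h2 := hs.1
      simp only [Pi.zero_apply]
      rw [aux_gd _ h2.le, aux_gd _ h1, aux_gd _ h1]
      positivity
    · rw [intervalIntegrable_iff_integrableOn_Ioc_of_le ht.le] at hi'
      exact hi'.const_mul _
    · filter_upwards [ae_restrict_mem measurableSet_Ioc] with s hs
      have h2 := hs.1
      rcases hs.2.lt_or_eq with hlt | heq
      · have ha : 0 < t - s := by linarith
        have e : t - s + 2 * s = t + s := by ring
        rw [aux_inner s (t - s) hs.1 ha, e]
        have hh := hb (t - s) ha (by linarith)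
        have hx : Real.exp (-‖(2:ℝ)⁻¹ • (x₁ + x₂)‖ ^ 2 / (t + s))
            ≤ Real.exp (-‖(2:ℝ)⁻¹ • (x₁ + x₂)‖ ^ 2 / (2 * t)) := by
          apply Real.exp_le_exp.2
          rw [neg_div, neg_div]
          apply neg_le_neg
          gcongr
          linarith
        calc _ = (4 * Real.pi ^ 2)⁻¹ * (t + s)⁻¹
                * Real.exp (-‖(2:ℝ)⁻¹ • (x₁ + x₂)‖ ^ 2 / (t + s))
                * ((t - s)⁻¹ * Real.exp (-‖(2:ℝ)⁻¹ • (x₁ - x₂)‖ ^ 2 / (t - s))) := by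
              rw [mul_inv, mul_inv (4 * Real.pi ^ 2)]; ring
          _ ≤ (4 * Real.pi ^ 2)⁻¹ * t⁻¹
                * Real.exp (-‖(2:ℝ)⁻¹ • (x₁ + x₂)‖ ^ 2 / (2 * t))
                * h (t - s) := by
              gcongr
              linarith
          _ = _ := by
              rw [hP, aux_gd _ ht.le]
              field_simp
              ring
      · have : t - s = 0 := by linarith
        have hz : ∀ x, gaussDensity 2 0 x = 0 := fun x => by rw [aux_gd _ le_rfl]; simp
        simp only [this, hz, mul_zero, integral_zero]
        have := h0 0 le_rfl
        positivity
  unfold gaussQ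
  rw [intervalIntegral.integral_of_le ht.le] at hK'
  rw [integral_const_mul, hK'] at main
  calc _ ≤ 2 * (P * (2 * Real.pi)⁻¹ * K) := by gcongr
    _ = _ := by field_simp

theorem aux_pt (t : ℝ) (ht : 0 < t) (x₁ x₂ : EuclideanSpace ℝ (Fin 2)) (hne : x₁ ≠ x₂) :
    gaussQ 2 t x₁ x₂ ≤ gaussDensity 2 t ((2:ℝ)⁻¹ • (x₁ + x₂)) *
      (4 * (t * gaussDensity 2 (t / 2) ((2:ℝ)⁻¹ • (x₁ - x₂))
              + max (Real.log (t / ‖(2:ℝ)⁻¹ • (x₁ - x₂)‖ ^ 2)) 0)) := by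
  have hpi := Real.pi_pos
  have hP0 : 0 ≤ gaussDensity 2 t ((2:ℝ)⁻¹ • (x₁ + x₂)) := by
    rw [aux_gd _ ht.le]; positivity
  have hr : 0 < ‖(2:ℝ)⁻¹ • (x₁ - x₂)‖ := by
    rw [norm_pos_iff]
    exact smul_ne_zero (by norm_num) (sub_ne_zero.2 hne)
  have hT : t * gaussDensity 2 (t / 2) ((2:ℝ)⁻¹ • (x₁ - x₂))
      = Real.pi⁻¹ * Real.exp (-‖(2:ℝ)⁻¹ • (x₁ - x₂)‖ ^ 2 / t) := by
    rw [aux_gd _ (by positivity)]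
    have : 2 * (t / 2) = t := by ring
    rw [this, mul_assoc 2, mul_div_assoc' Real.pi]
    field_simp
  rw [hT]
  generalize hρ : ‖(2:ℝ)⁻¹ • (x₁ - x₂)‖ ^ 2 = ρ
  have hρ0 : 0 < ρ := by rw [← hρ]; positivity
  obtain ⟨i1, v1⟩ := aux_int1 ρ t hρ0 ht
  obtain ⟨i2, v2⟩ := aux_int2 ρ t hρ0 ht
  rcases le_or_gt t ρ with hle | hlt
  · refine (aux_q t _ ht x₁ x₂ _ i1 (fun a ha => by positivity) v1 ?_).trans ?_
    · intro a ha hat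
      rw [hρ]
      gcongr
      rw [inv_eq_one_div, div_le_div_iff₀ ha (by positivity)]
      nlinarith
    · apply mul_le_mul_of_nonneg_left _ hP0
      have := le_max_right (Real.log (t / ρ)) 0
      have h3 : 0 ≤ Real.pi⁻¹ * Real.exp (-ρ / t) := by positivity
      linarith
  · refine (aux_q t _ ht x₁ x₂ _ (i1.add i2) (fun a ha => by positivity)
      ((intervalIntegral.integral_add i1 i2).trans (congrArg₂ (· + ·) v1 v2)) ?_).trans ?_
    · intro a ha hat
      rw [hρ]
      have hy : 0 < ρ / a := by positivity
      have he1 : Real.exp (-ρ / a) ≤ 1 := by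
        apply Real.exp_le_one_iff.2
        rw [neg_div]; linarith
      have he0 := Real.exp_pos (-ρ / a)
      have id1 : (ρ + a)⁻¹ - (a⁻¹ - ρ / a ^ 2) = (ρ + a)⁻¹ * (ρ / a) ^ 2 := by
        field_simp
        ring
      have h4 : a⁻¹ - ρ / a ^ 2 ≤ (ρ + a)⁻¹ := by
        have : 0 ≤ (ρ + a)⁻¹ * (ρ / a) ^ 2 := by positivity
        linarith
      have h5 : (ρ + a)⁻¹ * Real.exp (-ρ / a) ≤ (ρ + a)⁻¹ * 1 := by gcongr
      have h6 := mul_le_mul_of_nonneg_right h4 he0.le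
      linarith
    · apply mul_le_mul_of_nonneg_left _ hP0
      have hm := le_max_left (Real.log (t / ρ)) 0
      have hm0 := le_max_right (Real.log (t / ρ)) 0
      set M := max (Real.log (t / ρ)) 0
      have hl : Real.log ((ρ + t) / ρ) ≤ Real.log 2 + Real.log (t / ρ) := by
        rw [← Real.log_mul (by norm_num) (by positivity)]
        apply Real.log_le_log (by positivity)
        rw [← mul_div_assoc]
        gcongr
        linarith
      have hl2 := Real.log_two_lt_d9
      have hE : Real.exp (-1) ≤ Real.exp (-ρ / t) := by
        apply Real.exp_le_exp.2
        rw [neg_div]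
        have : ρ / t ≤ 1 := by rw [div_le_one ht]; exact hlt.le
        linarith
      have hE1 := Real.exp_neg_one_gt_d9
      have hpi1 : Real.pi⁻¹ ≤ 1 := inv_le_one_of_one_le₀ (by linarith [Real.pi_gt_three])
      have hpi0 : 0 < Real.pi⁻¹ := by positivity
      calc Real.pi⁻¹ * (Real.exp (-ρ / t) + Real.log ((ρ + t) / ρ))
          ≤ Real.pi⁻¹ * (4 * Real.exp (-ρ / t) + M) :=
            mul_le_mul_of_nonneg_left (by linarith) hpi0.le
        _ ≤ _ := by nlinarith

/-- **Lemma 3.3(iii).** There is an absolute constant `C > 0` such that for every σ-finite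
measure `μ` on `ℝ²`, every `t > 0` and all `x₁ ≠ x₂`, with `x̄ = (x₁+x₂)/2`, `r = (x₁-x₂)/2`:
`(μ * q_t)(x₁, x₂) ≤ C (μ * p_t)(x̄) (t p_{t/2}(r) + log₊(t/|r|²))`. -/
theorem gaussQ_conv_bound_dim_two :
    ∃ C : ℝ, 0 < C ∧
      ∀ (μ : Measure (EuclideanSpace ℝ (Fin 2))), SigmaFinite μ →
      ∀ t : ℝ, 0 < t → ∀ x₁ x₂ : EuclideanSpace ℝ (Fin 2), x₁ ≠ x₂ →
      ∫⁻ u, ENNReal.ofReal (gaussQ 2 t (x₁ - u) (x₂ - u)) ∂μ ≤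
        ENNReal.ofReal C
          * (∫⁻ u, ENNReal.ofReal (gaussDensity 2 t ((2:ℝ)⁻¹ • (x₁ + x₂) - u)) ∂μ)
          * ENNReal.ofReal (t * gaussDensity 2 (t / 2) ((2:ℝ)⁻¹ • (x₁ - x₂))
              + max (Real.log (t / ‖(2:ℝ)⁻¹ • (x₁ - x₂)‖ ^ 2)) 0) := by
  refine ⟨4, by norm_num, ?_⟩
  intro μ _ t ht x₁ x₂ hne
  set B := t * gaussDensity 2 (t / 2) ((2:ℝ)⁻¹ • (x₁ - x₂))
              + max (Real.log (t / ‖(2:ℝ)⁻¹ • (x₁ - x₂)‖ ^ 2)) 0 with hB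
  rw [mul_right_comm, ← lintegral_const_mul' _ _ (by finiteness)]
  apply lintegral_mono
  intro u
  have h := aux_pt t ht (x₁ - u) (x₂ - u) (fun h => hne (sub_left_injective h))
  have e1 : (2:ℝ)⁻¹ • (x₁ - u + (x₂ - u)) = (2:ℝ)⁻¹ • (x₁ + x₂) - u := by module
  have e2 : x₁ - u - (x₂ - u) = x₁ - x₂ := by abel
  rw [e1, e2, ← hB] at h
  have hP0 : 0 ≤ gaussDensity 2 t ((2:ℝ)⁻¹ • (x₁ + x₂) - u) := by
    have := Real.pi_pos
    rw [aux_gd _ ht.le]; positivity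
  calc _ ≤ _ := ENNReal.ofReal_le_ofReal h
    _ = _ := by
      rw [ENNReal.ofReal_mul hP0, ENNReal.ofReal_mul (by norm_num)]
      ring
end

section
/- There exists a universal constant c > 0 such that for every σ-finite Borel measure μ on ℝ² with μ p_s < ∞ for all s > 0, every t > 0 and every x ∈ ℝ², one has (μ * q_t)(x₁, x₂) / |log |r|| → c · (μ * p_t)(x) as x₁, x₂ → x with x₁ ≠ x₂, where r = (x₁ - x₂)/2. -/
open Filter MeasureTheory

abbrev E2 := EuclideanSpace ℝ (Fin 2)

lemma gd2 (t : ℝ) (x : E2) :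
    gaussDensity 2 t x = (2 * Real.pi * t)⁻¹ * Real.exp (-‖x‖ ^ 2 / (2 * t)) := by
  unfold gaussDensity
  congr 1
  rw [show (-((2:ℕ):ℝ) / 2) = -1 by norm_num, Real.rpow_neg_one]

lemma inner_int {s a : ℝ} (hs : 0 < s) (ha : 0 < a) (x y : E2) :
    ∫ u, gaussDensity 2 s u * gaussDensity 2 a (x - u) * gaussDensity 2 a (y - u) =
      (2 * (2 * Real.pi) * (2 * Real.pi * (s + a / 2)))⁻¹ *
        (a⁻¹ * Real.exp (-‖(2:ℝ)⁻¹ • (x - y)‖ ^ 2 / a)) *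
        Real.exp (-‖(2:ℝ)⁻¹ • (x + y)‖ ^ 2 / (2 * (s + a / 2))) := by
  have hb : 0 < 1 / (2 * s) + 1 / a := by positivity
  have hpi := Real.pi_pos
  have key : ∀ u : E2, gaussDensity 2 s u * gaussDensity 2 a (x - u) * gaussDensity 2 a (y - u) =
      ((2 * Real.pi * s)⁻¹ * (2 * Real.pi * a)⁻¹ * (2 * Real.pi * a)⁻¹ *
        Real.exp (-‖(2:ℝ)⁻¹ • (x - y)‖ ^ 2 / a) *
        Real.exp (-‖(2:ℝ)⁻¹ • (x + y)‖ ^ 2 / (2 * (s + a / 2)))) *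
      Real.exp (-(1 / (2 * s) + 1 / a) * ‖u - (2 * s / (a + 2 * s)) • ((2:ℝ)⁻¹ • (x + y))‖ ^ 2) := by
    intro u
    simp only [gd2]
    have : ∀ A B C D F a b c d e f : ℝ, A * B * C = D → a + b + c = d + e + f →
      (A * Real.exp a) * (B * Real.exp b) * (C * Real.exp c) =
        (D * Real.exp d * Real.exp e) * Real.exp f := by
      intro A B C D F a b c d e f h1 h2
      rw [← h1, show (A * Real.exp a) * (B * Real.exp b) * (C * Real.exp c) =
        A * B * C * (Real.exp (a + b + c)) by rw [Real.exp_add, Real.exp_add]; ring, h2,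
        Real.exp_add, Real.exp_add]; ring
    apply this _ _ _ _ 0 _ _ _ _ _ _ rfl
    simp only [EuclideanSpace.norm_sq_eq, Fin.sum_univ_two, Real.norm_eq_abs, sq_abs,
      PiLp.sub_apply, PiLp.add_apply, PiLp.smul_apply, smul_eq_mul]
    have h3 : a + 2 * s ≠ 0 := by positivity
    have h4 : s + a / 2 ≠ 0 := by positivity
    have h5 : s * 2 + a ≠ 0 := by positivity
    rw [show 2 * (s + a / 2) = a + 2 * s by ring]
    field_simp
    ring
  simp only [key]
  rw [integral_const_mul]
  rw [integral_sub_right_eq_self (fun u : E2 => Real.exp (-(1 / (2 * s) + 1 / a) * ‖u‖ ^ 2)),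
    GaussianFourier.integral_rexp_neg_mul_sq_norm hb]
  rw [finrank_euclideanSpace_fin, show ((2:ℕ):ℝ)/2 = 1 by norm_num, Real.rpow_one]
  have h4 : s + a / 2 ≠ 0 := by positivity
  have h5 : a + 2 * s ≠ 0 := by positivity
  rw [show 2 * Real.pi * (s + a / 2) = Real.pi * (a + 2 * s) by ring]
  have h6 : 1 / (2 * s) + 1 / a = (a + 2 * s) / (2 * s * a) := by field_simp
  rw [h6]
  field_simp

/-- The singular kernel. -/
noncomputable def kk (r a : ℝ) : ℝ := a⁻¹ * Real.exp (-r ^ 2 / a)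

/-- The smooth factor. -/
noncomputable def gg (t a : ℝ) (m : E2) : ℝ :=
  (2 * Real.pi * (2 * Real.pi * (t - a / 2)))⁻¹ * Real.exp (-‖m‖ ^ 2 / (2 * (t - a / 2)))

lemma gaussQ_eq {t : ℝ} (ht : 0 < t) (x y : E2) :
    gaussQ 2 t x y = ∫ a in (0:ℝ)..t,
      kk ‖(2:ℝ)⁻¹ • (x - y)‖ a * gg t a ((2:ℝ)⁻¹ • (x + y)) := by
  have h := intervalIntegral.integral_comp_sub_left (a := 0) (b := t)
    (fun a => kk ‖(2:ℝ)⁻¹ • (x - y)‖ a * gg t a ((2:ℝ)⁻¹ • (x + y))) t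
  rw [sub_self, sub_zero] at h
  rw [← h, gaussQ, intervalIntegral.integral_of_le ht.le, ← integral_const_mul,
    integral_Ioc_eq_integral_Ioo, integral_Ioc_eq_integral_Ioo]
  apply setIntegral_congr_fun measurableSet_Ioo
  rintro s ⟨hs, hst⟩
  simp only
  rw [inner_int hs (sub_pos.2 hst)]
  unfold kk gg
  rw [show s + (t - s) / 2 = t - (t - s) / 2 by ring]
  simp only [mul_inv]
  ring

lemma kk_nonneg {r a : ℝ} (ha : 0 ≤ a) : 0 ≤ kk r a := by unfold kk; positivity

lemma kk_le {r a : ℝ} (ha : 0 ≤ a) (hr : 0 < r) : kk r a ≤ (a + r ^ 2)⁻¹ := by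
  rcases ha.eq_or_lt with rfl | ha
  · simp [kk]; positivity
  have h := Real.add_one_le_exp (r ^ 2 / a)
  unfold kk
  rw [neg_div, Real.exp_neg, ← mul_inv]
  apply inv_anti₀ (by positivity)
  calc a + r ^ 2 = a * (r ^ 2 / a + 1) := by field_simp; ring
    _ ≤ _ := by gcongr

lemma le_kk {r a : ℝ} (ha : 0 < a) (hr : 0 < r) :
    (a + r ^ 2)⁻¹ - 2 * r ^ 2 / (a + r ^ 2) ^ 2 ≤ kk r a := by
  have e : (a + r ^ 2)⁻¹ - 2 * r ^ 2 / (a + r ^ 2) ^ 2 = (a - r ^ 2) / (a + r ^ 2) ^ 2 := by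
    field_simp; ring
  rw [e]
  rcases le_total a (r ^ 2) with h | h
  · exact (div_nonpos_of_nonpos_of_nonneg (by linarith) (by positivity)).trans (kk_nonneg ha.le)
  · have h1 := Real.add_one_le_exp (-r ^ 2 / a)
    unfold kk
    calc (a - r ^ 2) / (a + r ^ 2) ^ 2 ≤ (a - r ^ 2) / a ^ 2 := by
          have : 0 ≤ a - r ^ 2 := by linarith
          gcongr
          nlinarith [sq_nonneg r]
      _ = a⁻¹ * (-r ^ 2 / a + 1) := by field_simp; ring
      _ ≤ _ := by gcongr

lemma kk_meas (r : ℝ) : Measurable (kk r) := by unfold kk; fun_prop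

lemma up_int {r t : ℝ} (ht : 0 < t) (hr : 0 < r) :
    IntervalIntegrable (fun a => (a + r ^ 2)⁻¹) volume 0 t := by
  apply ContinuousOn.intervalIntegrable
  rw [Set.uIcc_of_le ht.le]
  intro a ha
  have : a + r ^ 2 ≠ 0 := by have := ha.1; positivity
  exact ContinuousAt.continuousWithinAt (by fun_prop (disch := assumption))

lemma kk_int {r t : ℝ} (ht : 0 < t) (hr : 0 < r) :
    IntervalIntegrable (kk r) volume 0 t := by
  apply (up_int ht hr).mono_fun (kk_meas r).aestronglyMeasurable
  rw [Set.uIoc_of_le ht.le]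
  filter_upwards [ae_restrict_mem measurableSet_Ioc] with a ha
  rw [Real.norm_of_nonneg (kk_nonneg ha.1.le), Real.norm_of_nonneg]
  · exact kk_le ha.1.le hr
  · have := ha.1; positivity

lemma J_le {r t : ℝ} (ht : 0 < t) (hr : 0 < r) :
    ∫ a in (0:ℝ)..t, kk r a ≤ Real.log (t + r ^ 2) - 2 * Real.log r := by
  have h1 : ∫ a in (0:ℝ)..t, (a + r ^ 2)⁻¹ = Real.log (t + r ^ 2) - Real.log (0 + r ^ 2) := by
    apply intervalIntegral.integral_eq_sub_of_hasDerivAt (f := fun a => Real.log (a + r ^ 2)) _ (up_int ht hr)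
    intro a ha
    rw [Set.uIcc_of_le ht.le] at ha
    have : a + r ^ 2 ≠ 0 := by have := ha.1; positivity
    simpa using ((hasDerivAt_id a).add_const (r ^ 2)).log this
  have h2 : ∫ a in (0:ℝ)..t, kk r a ≤ ∫ a in (0:ℝ)..t, (a + r ^ 2)⁻¹ :=
    intervalIntegral.integral_mono_on ht.le (kk_int ht hr) (up_int ht hr)
      (fun a ha => kk_le ha.1 hr)
  rw [h1, zero_add, Real.log_pow] at h2
  simpa using h2

lemma le_J {r t : ℝ} (ht : 0 < t) (hr : 0 < r) :
    Real.log (t + r ^ 2) - 2 * Real.log r - 2 ≤ ∫ a in (0:ℝ)..t, kk r a := by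
  have hi : IntervalIntegrable (fun a => (a + r ^ 2)⁻¹ - 2 * r ^ 2 / (a + r ^ 2) ^ 2) volume 0 t := by
    apply ContinuousOn.intervalIntegrable
    rw [Set.uIcc_of_le ht.le]
    intro a ha
    have : a + r ^ 2 ≠ 0 := by have := ha.1; positivity
    have h2 : (a + r ^ 2) ^ 2 ≠ 0 := by positivity
    exact ContinuousAt.continuousWithinAt (by fun_prop (disch := assumption))
  have h1 : ∫ a in (0:ℝ)..t, ((a + r ^ 2)⁻¹ - 2 * r ^ 2 / (a + r ^ 2) ^ 2) =
      (Real.log (t + r ^ 2) + 2 * r ^ 2 * (t + r ^ 2)⁻¹) -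
        (Real.log (0 + r ^ 2) + 2 * r ^ 2 * (0 + r ^ 2)⁻¹) := by
    apply intervalIntegral.integral_eq_sub_of_hasDerivAt
      (f := fun a => Real.log (a + r ^ 2) + 2 * r ^ 2 * (a + r ^ 2)⁻¹) _ hi
    intro a ha
    rw [Set.uIcc_of_le ht.le] at ha
    have : a + r ^ 2 ≠ 0 := by have := ha.1; positivity
    have hd := (hasDerivAt_id a).add_const (r ^ 2)
    refine ((hd.log this).add ((hd.inv this).const_mul (2 * r ^ 2))).congr_deriv ?_
    simp only [id]
    ring
  have h2 : ∫ a in (0:ℝ)..t, ((a + r ^ 2)⁻¹ - 2 * r ^ 2 / (a + r ^ 2) ^ 2) ≤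
      ∫ a in (0:ℝ)..t, kk r a := by
    apply intervalIntegral.integral_mono_on_of_le_Ioo ht.le hi (kk_int ht hr)
      (fun a ha => le_kk ha.1 hr)
  rw [h1, zero_add, Real.log_pow] at h2
  have h3 : 2 * r ^ 2 * (r ^ 2)⁻¹ = 2 := by field_simp
  have h4 : 0 ≤ 2 * r ^ 2 * (t + r ^ 2)⁻¹ := by positivity
  rw [h3] at h2
  push_cast at h2
  linarith

lemma J_tendsto {t : ℝ} (ht : 0 < t) :
    Tendsto (fun r => (∫ a in (0:ℝ)..t, kk r a) / |Real.log r|) (nhdsWithin 0 (Set.Ioi 0))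
      (nhds 2) := by
  have hL : Tendsto (fun r => |Real.log r|) (nhdsWithin 0 (Set.Ioi 0)) atTop :=
    tendsto_abs_atBot_atTop.comp Real.tendsto_log_nhdsGT_zero
  have hc : Tendsto (fun r : ℝ => Real.log (t + r ^ 2)) (nhdsWithin 0 (Set.Ioi 0))
      (nhds (Real.log t)) := by
    have : ContinuousAt (fun r : ℝ => Real.log (t + r ^ 2)) 0 := by
      apply ContinuousAt.log (by fun_prop); simp [ht.ne']
    simpa using this.tendsto.mono_left nhdsWithin_le_nhds
  have h1 : Tendsto (fun r : ℝ => Real.log (t + r ^ 2) / |Real.log r| + 2)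
      (nhdsWithin 0 (Set.Ioi 0)) (nhds 2) := by
    simpa using (hc.div_atTop hL).add_const 2
  have h2 : Tendsto (fun r : ℝ => (Real.log (t + r ^ 2) - 2) / |Real.log r| + 2)
      (nhdsWithin 0 (Set.Ioi 0)) (nhds 2) := by
    simpa using ((hc.sub_const 2).div_atTop hL).add_const 2
  have hev : ∀ᶠ r : ℝ in nhdsWithin 0 (Set.Ioi 0), 0 < r ∧ r < 1 :=
    Ioo_mem_nhdsGT one_pos
  refine tendsto_of_tendsto_of_tendsto_of_le_of_le' h2 h1 ?_ ?_
  · filter_upwards [hev] with r hr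
    have hl := Real.log_neg hr.1 hr.2
    have := le_J ht hr.1
    rw [abs_of_neg hl, div_add' _ _ _ (by linarith)]
    gcongr
    · linarith
    · linarith
  · filter_upwards [hev] with r hr
    have hl := Real.log_neg hr.1 hr.2
    have := J_le ht hr.1
    rw [abs_of_neg hl, div_add' _ _ _ (by linarith)]
    gcongr
    · linarith
    · linarith

/-- Pointwise bound on the smooth factor. -/
lemma gg_le {t a : ℝ} (ht : 0 < t) (ha : a ∈ Set.Icc 0 t) (m : E2) :
    gg t a m ≤ (2 * Real.pi * (Real.pi * t))⁻¹ * Real.exp (-‖m‖ ^ 2 / (2 * t)) := by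
  have hpi := Real.pi_pos
  have h1 : 0 < t - a / 2 := by linarith [ha.2]
  unfold gg
  have h3 : Real.pi * t ≤ 2 * Real.pi * (t - a / 2) := by nlinarith [ha.2]
  have h2 : -‖m‖ ^ 2 / (2 * (t - a / 2)) ≤ -‖m‖ ^ 2 / (2 * t) := by
    rw [neg_div, neg_div, neg_le_neg_iff]
    gcongr
    linarith [ha.1]
  gcongr

lemma gg_nonneg {t a : ℝ} (ht : 0 < t) (ha : a ∈ Set.Icc 0 t) (m : E2) : 0 ≤ gg t a m := by
  have h1 : 0 < t - a / 2 := by linarith [ha.2]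
  have hpi := Real.pi_pos
  unfold gg; positivity

lemma gg_meas (t : ℝ) : Measurable (fun p : ℝ × E2 => gg t p.1 p.2) := by
  unfold gg; fun_prop

lemma kg_int {r t : ℝ} (ht : 0 < t) (hr : 0 < r) (m : E2) :
    IntervalIntegrable (fun a => kk r a * gg t a m) volume 0 t := by
  have hpi := Real.pi_pos
  have hm : Measurable (fun a => gg t a m) :=
    (gg_meas t).comp (measurable_id.prodMk measurable_const)
  apply ((kk_int ht hr).mul_const ((2 * Real.pi * (Real.pi * t))⁻¹ * Real.exp (-‖m‖ ^ 2 / (2 * t)))).mono_fun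
    ((kk_meas r).mul hm).aestronglyMeasurable
  rw [Set.uIoc_of_le ht.le]
  filter_upwards [ae_restrict_mem measurableSet_Ioc] with a ha
  have ha' : a ∈ Set.Icc 0 t := ⟨ha.1.le, ha.2⟩
  have h1 := kk_nonneg (r := r) ha.1.le
  have h2 := gg_nonneg ht ha' m
  change ‖kk r a * gg t a m‖ ≤ _
  rw [Real.norm_of_nonneg (mul_nonneg h1 h2), Real.norm_of_nonneg (by positivity)]
  exact mul_le_mul_of_nonneg_left (gg_le ht ha' m) h1

lemma gg_mod {t : ℝ} (ht : 0 < t) (x : E2) {ε : ℝ} (hε : 0 < ε) :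
    ∃ C : ℝ, 0 ≤ C ∧ ∀ᶠ m in nhds x, ∀ a ∈ Set.Icc 0 t, |gg t a m - gg t 0 x| ≤ ε + C * a := by
  have hpi := Real.pi_pos
  have hc : ContinuousAt (fun p : ℝ × E2 => gg t p.1 p.2) (0, x) := by
    unfold gg
    apply ContinuousAt.mul
    · apply ContinuousAt.inv₀ (by fun_prop)
      simp; positivity
    · apply Real.continuous_exp.continuousAt.comp
      apply ContinuousAt.div (by fun_prop) (by fun_prop)
      simp; positivity
  have h := Metric.tendsto_nhds.1 hc.tendsto ε hε
  rw [nhds_prod_eq, eventually_prod_iff] at h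
  obtain ⟨pa, hpa, pb, hpb, hh⟩ := h
  obtain ⟨δ, hδ, hpa⟩ := Metric.eventually_nhds_iff.1 hpa
  set M := (2 * Real.pi * (Real.pi * t))⁻¹ with hM
  have hMp : 0 < M := by positivity
  have bd : ∀ a ∈ Set.Icc 0 t, ∀ m : E2, gg t a m ≤ M := fun a ha m =>
    (gg_le ht ha m).trans (mul_le_of_le_one_right hMp.le (Real.exp_le_one_iff.2
      (div_nonpos_of_nonpos_of_nonneg (by simp) (by positivity))))
  have h0 : (0:ℝ) ∈ Set.Icc 0 t := ⟨le_rfl, ht.le⟩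
  refine ⟨M / δ, by positivity, ?_⟩
  filter_upwards [hpb] with m hm a ha
  rcases lt_or_ge a δ with h1 | h1
  · have := hh (hpa (y := a) (by rw [Real.dist_eq, sub_zero, abs_of_nonneg ha.1]; exact h1)) hm
    rw [Real.dist_eq] at this
    have h3 : 0 ≤ M / δ * a := by have := ha.1; positivity
    simp only at this
    linarith
  · have h3 : M ≤ M / δ * a := by
      rw [div_mul_eq_mul_div, le_div_iff₀ hδ]; gcongr
    have := bd a ha m
    have := bd 0 h0 x
    have := gg_nonneg ht ha m
    have := gg_nonneg ht h0 x
    rw [abs_le]; constructor <;> linarith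

lemma key_tendsto {ι : Type*} {l : Filter ι} {t : ℝ} (ht : 0 < t) {r : ι → ℝ} {m : ι → E2} {x : E2}
    (hr : Tendsto r l (nhdsWithin 0 (Set.Ioi 0))) (hm : Tendsto m l (nhds x)) :
    Tendsto (fun i => (∫ a in (0:ℝ)..t, kk (r i) a * gg t a (m i)) / |Real.log (r i)|) l
      (nhds (2 * gg t 0 x)) := by
  have hJ := (J_tendsto ht).comp hr
  have hL : Tendsto (fun i => |Real.log (r i)|) l atTop :=
    (tendsto_abs_atBot_atTop.comp Real.tendsto_log_nhdsGT_zero).comp hr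
  have hJg := hJ.mul_const (gg t 0 x)
  suffices h : Tendsto (fun i => (∫ a in (0:ℝ)..t, kk (r i) a * gg t a (m i)) / |Real.log (r i)|
      - (∫ a in (0:ℝ)..t, kk (r i) a) / |Real.log (r i)| * gg t 0 x) l (nhds 0) by
    have := h.add hJg
    simpa using this
  rw [Metric.tendsto_nhds]
  intro ε hε
  obtain ⟨C, hC, hev⟩ := gg_mod ht x (ε := ε / 4) (by positivity)
  have hlim : Tendsto (fun i => ε / 4 * ((∫ a in (0:ℝ)..t, kk (r i) a) / |Real.log (r i)|) +
      C * t / |Real.log (r i)|) l (nhds (ε / 4 * 2 + 0)) :=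
    (hJ.const_mul (ε / 4)).add (hL.const_div_atTop (C * t))
  have hlt : ε / 4 * 2 + 0 < ε := by linarith
  filter_upwards [hlim.eventually_lt_const hlt, hm.eventually hev,
    hr.eventually self_mem_nhdsWithin, hL.eventually_gt_atTop 0] with i h1 h2 h3 h4
  refine lt_of_le_of_lt ?_ h1
  rw [Real.dist_eq, sub_zero, div_mul_eq_mul_div, ← sub_div, abs_div, abs_abs,
    ← mul_div_assoc, ← add_div]
  gcongr
  have hri : 0 < r i := h3
  rw [← intervalIntegral.integral_mul_const,
    ← intervalIntegral.integral_sub (kg_int ht hri _) ((kk_int ht hri).mul_const _)]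
  have e : ε / 4 * (∫ a in (0:ℝ)..t, kk (r i) a) + C * t =
      ∫ a in (0:ℝ)..t, (ε / 4 * kk (r i) a + C) := by
    rw [intervalIntegral.integral_add ((kk_int ht hri).const_mul _) (by simp),
      intervalIntegral.integral_const_mul]
    simp [mul_comm]
  rw [e, ← Real.norm_eq_abs]
  apply intervalIntegral.norm_integral_le_of_norm_le ht.le
  · refine ae_of_all _ fun a ha => ?_
    have hk := kk_nonneg (r := r i) ha.1.le
    rw [← mul_sub, norm_mul, Real.norm_of_nonneg hk, Real.norm_eq_abs]
    have hk2 : kk (r i) a * a ≤ 1 := by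
      have h5 := kk_le ha.1.le hri
      have ha1 := ha.1
      calc kk (r i) a * a ≤ (a + r i ^ 2)⁻¹ * a := by gcongr
        _ ≤ 1 := by
          rw [inv_mul_le_iff₀ (by positivity)]
          nlinarith [sq_nonneg (r i)]
    calc kk (r i) a * |gg t a (m i) - gg t 0 x| ≤ kk (r i) a * (ε / 4 + C * a) := by
          gcongr
          exact h2 a ⟨ha.1.le, ha.2⟩
      _ = ε / 4 * kk (r i) a + C * (kk (r i) a * a) := by ring
      _ ≤ _ := by
        have := mul_le_of_le_one_right hC hk2
        linarith
  · exact ((kk_int ht hri).const_mul _).add (by simp)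

lemma Q_meas {t : ℝ} (ht : 0 < t) (x y : E2) :
    Measurable (fun u : E2 => gaussQ 2 t (x - u) (y - u)) := by
  simp only [gaussQ_eq ht, intervalIntegral.integral_of_le ht.le]
  apply StronglyMeasurable.measurable
  apply StronglyMeasurable.integral_prod_right
  apply Measurable.stronglyMeasurable
  unfold kk gg
  simp only [Function.uncurry_def]
  fun_prop

/-- **Lemma 3.3(iv).** There is a universal constant `c > 0` such that for every σ-finite
`μ` on `ℝ²` with `μ p_s < ∞` for all `s > 0`, every `t > 0` and every `x ∈ ℝ²`, one has
`(μ * q_t)(x₁, x₂) / |log |r|| → c (μ * p_t)(x)` as `x₁, x₂ → x` with `x₁ ≠ x₂`,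
where `r = (x₁ - x₂)/2`. -/
theorem gaussQ_conv_asymptotics_dim_two :
    ∃ c : ℝ, 0 < c ∧
      ∀ (μ : Measure (EuclideanSpace ℝ (Fin 2))), SigmaFinite μ →
      (∀ s : ℝ, 0 < s → ∫⁻ u, ENNReal.ofReal (gaussDensity 2 s u) ∂μ < ⊤) →
      ∀ t : ℝ, 0 < t → ∀ x : EuclideanSpace ℝ (Fin 2),
      Tendsto
        (fun q : EuclideanSpace ℝ (Fin 2) × EuclideanSpace ℝ (Fin 2) =>
          (∫⁻ u, ENNReal.ofReal (gaussQ 2 t (q.1 - u) (q.2 - u)) ∂μ).toReal /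
            |Real.log ‖(2:ℝ)⁻¹ • (q.1 - q.2)‖|)
        (nhdsWithin (x, x)
          {q : EuclideanSpace ℝ (Fin 2) × EuclideanSpace ℝ (Fin 2) | q.1 ≠ q.2})
        (nhds (c * (∫⁻ u, ENNReal.ofReal (gaussDensity 2 t (x - u)) ∂μ).toReal)) := by
  have hpi := Real.pi_pos
  refine ⟨Real.pi⁻¹, by positivity, ?_⟩
  intro μ _ hμ t ht x
  set l := nhdsWithin (x, x) {q : E2 × E2 | q.1 ≠ q.2} with hl
  rcases eq_or_neBot l with hbot | hne
  · rw [hbot]; exact tendsto_bot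
  have hid : Tendsto (fun q : E2 × E2 => q) l (nhds (x, x)) := tendsto_id.mono_left nhdsWithin_le_nhds
  have hr : Tendsto (fun q : E2 × E2 => ‖(2:ℝ)⁻¹ • (q.1 - q.2)‖) l (nhdsWithin 0 (Set.Ioi 0)) := by
    rw [tendsto_nhdsWithin_iff]
    constructor
    · have : Continuous (fun q : E2 × E2 => ‖(2:ℝ)⁻¹ • (q.1 - q.2)‖) := by fun_prop
      simpa [Function.comp_def] using (this.tendsto (x, x)).comp hid
    · filter_upwards [self_mem_nhdsWithin] with q hq
      have : q.1 - q.2 ≠ 0 := sub_ne_zero.2 hq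
      simpa using this
  have hm : ∀ u : E2, Tendsto (fun q : E2 × E2 => (2:ℝ)⁻¹ • ((q.1 - u) + (q.2 - u))) l (nhds (x - u)) := by
    intro u
    have : Continuous (fun q : E2 × E2 => (2:ℝ)⁻¹ • ((q.1 - u) + (q.2 - u))) := by fun_prop
    have h := (this.tendsto (x, x)).comp hid
    have e : (2:ℝ)⁻¹ • ((x - u) + (x - u)) = x - u := by
      rw [← two_smul ℝ (x - u), smul_smul]; norm_num
    simp only [e] at h
    exact h
  have hL : Tendsto (fun q : E2 × E2 => |Real.log ‖(2:ℝ)⁻¹ • (q.1 - q.2)‖|) l atTop :=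
    (tendsto_abs_atBot_atTop.comp Real.tendsto_log_nhdsGT_zero).comp hr
  have hgg : ∀ u : E2, 2 * gg t 0 (x - u) = Real.pi⁻¹ * gaussDensity 2 t (x - u) := by
    intro u
    rw [gd2, gg]
    simp only [mul_inv, zero_div, sub_zero]
    ring
  -- pointwise convergence
  have hpt : ∀ u : E2, Tendsto (fun q : E2 × E2 => gaussQ 2 t (q.1 - u) (q.2 - u) /
      |Real.log ‖(2:ℝ)⁻¹ • (q.1 - q.2)‖|) l (nhds (Real.pi⁻¹ * gaussDensity 2 t (x - u))) := by
    intro u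
    rw [← hgg]
    have := key_tendsto ht hr (hm u)
    simpa only [gaussQ_eq ht, sub_sub_sub_cancel_right] using this
  -- domination
  set C := 3 * ((2 * Real.pi * (Real.pi * t))⁻¹ * Real.exp ((‖x‖ + 1) ^ 2 / (2 * t))) *
    (2 * Real.pi * (2 * t)) with hC
  have hC0 : 0 ≤ C := by positivity
  have hm0 : ∀ᶠ q in l, ‖(2:ℝ)⁻¹ • (q.1 + q.2)‖ < ‖x‖ + 1 := by
    have h := (hm 0).norm
    simp only [sub_zero] at h
    exact h.eventually_lt_const (by linarith)
  have hdom : ∀ᶠ q in l, ∀ u : E2, gaussQ 2 t (q.1 - u) (q.2 - u) /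
      |Real.log ‖(2:ℝ)⁻¹ • (q.1 - q.2)‖| ≤ C * gaussDensity 2 (2 * t) u := by
    filter_upwards [((J_tendsto ht).comp hr).eventually_lt_const (show (2:ℝ) < 3 by norm_num), hm0,
      hr.eventually self_mem_nhdsWithin, hL.eventually_gt_atTop 0] with q h1 h2 h3 h4 u
    have h3 : 0 < ‖(2:ℝ)⁻¹ • (q.1 - q.2)‖ := h3
    rw [gaussQ_eq ht, sub_sub_sub_cancel_right]
    set r := ‖(2:ℝ)⁻¹ • (q.1 - q.2)‖
    set m := (2:ℝ)⁻¹ • (q.1 + q.2) with hmdef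
    have e : (2:ℝ)⁻¹ • ((q.1 - u) + (q.2 - u)) = m - u := by
      rw [hmdef]; module
    rw [e]
    set B := (2 * Real.pi * (Real.pi * t))⁻¹ * Real.exp (-‖m - u‖ ^ 2 / (2 * t)) with hB
    have hB0 : 0 ≤ B := by positivity
    have h5 : ∫ a in (0:ℝ)..t, kk r a * gg t a (m - u) ≤ (∫ a in (0:ℝ)..t, kk r a) * B := by
      rw [← intervalIntegral.integral_mul_const]
      apply intervalIntegral.integral_mono_on ht.le (kg_int ht h3 _) ((kk_int ht h3).mul_const _)
      intro a ha
      exact mul_le_mul_of_nonneg_left (gg_le ht ha _) (kk_nonneg ha.1)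
    have h6 : B ≤ (2 * Real.pi * (Real.pi * t))⁻¹ * Real.exp ((‖x‖ + 1) ^ 2 / (2 * t)) *
        Real.exp (-‖u‖ ^ 2 / (2 * (2 * t))) := by
      rw [hB, mul_assoc (2 * Real.pi * (Real.pi * t))⁻¹, ← Real.exp_add]
      have h7 : ‖u‖ ≤ ‖m‖ + ‖m - u‖ := by
        have := norm_sub_le m (m - u)
        simpa using this
      have h8 : ‖u‖ ^ 2 ≤ 2 * (‖x‖ + 1) ^ 2 + 2 * ‖m - u‖ ^ 2 := by
        have h9 : ‖u‖ ≤ (‖x‖ + 1) + ‖m - u‖ := by linarith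
        have h10 : ‖u‖ ^ 2 ≤ ((‖x‖ + 1) + ‖m - u‖) ^ 2 := by gcongr
        nlinarith [sq_nonneg ((‖x‖ + 1) - ‖m - u‖)]
      gcongr
      rw [show (‖x‖ + 1) ^ 2 / (2 * t) + -‖u‖ ^ 2 / (2 * (2 * t)) =
        ((‖x‖ + 1) ^ 2 - ‖u‖ ^ 2 / 2) / (2 * t) by field_simp; ring]
      gcongr
      linarith
    calc (∫ a in (0:ℝ)..t, kk r a * gg t a (m - u)) / |Real.log r|
        ≤ ((∫ a in (0:ℝ)..t, kk r a) * B) / |Real.log r| := by gcongr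
      _ = ((∫ a in (0:ℝ)..t, kk r a) / |Real.log r|) * B := by ring
      _ ≤ 3 * B := by
        apply mul_le_mul_of_nonneg_right _ hB0
        exact h1.le
      _ ≤ 3 * ((2 * Real.pi * (Real.pi * t))⁻¹ * Real.exp ((‖x‖ + 1) ^ 2 / (2 * t)) *
        Real.exp (-‖u‖ ^ 2 / (2 * (2 * t)))) := by gcongr
      _ = C * gaussDensity 2 (2 * t) u := by
        rw [gd2, hC]
        field_simp
  have hlim : Tendsto (fun q : E2 × E2 => ∫⁻ u, ENNReal.ofReal (gaussQ 2 t (q.1 - u) (q.2 - u) /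
      |Real.log ‖(2:ℝ)⁻¹ • (q.1 - q.2)‖|) ∂μ) l
      (nhds (∫⁻ u, ENNReal.ofReal (Real.pi⁻¹ * gaussDensity 2 t (x - u)) ∂μ)) := by
    apply tendsto_lintegral_filter_of_dominated_convergence
      (fun u => ENNReal.ofReal (C * gaussDensity 2 (2 * t) u))
    · exact Eventually.of_forall fun q => ((Q_meas ht q.1 q.2).div_const _).ennreal_ofReal
    · filter_upwards [hdom] with q hq
      exact ae_of_all _ fun u => ENNReal.ofReal_le_ofReal (hq u)
    · simp only [ENNReal.ofReal_mul hC0]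
      rw [lintegral_const_mul' _ _ ENNReal.ofReal_ne_top]
      exact (ENNReal.mul_lt_top ENNReal.ofReal_lt_top (hμ (2 * t) (by positivity))).ne
    · exact ae_of_all _ fun u => (ENNReal.continuous_ofReal.tendsto _).comp (hpt u)
  have hfin : ∫⁻ u, ENNReal.ofReal (Real.pi⁻¹ * gaussDensity 2 t (x - u)) ∂μ ≠ ⊤ := by
    have hb : ∀ u : E2, Real.pi⁻¹ * gaussDensity 2 t (x - u) ≤ C * gaussDensity 2 (2 * t) u := by
      intro u
      exact le_of_tendsto (hpt u) (hdom.mono fun q hq => hq u)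
    refine ne_top_of_le_ne_top ?_ (lintegral_mono fun u => ENNReal.ofReal_le_ofReal (hb u))
    simp only [ENNReal.ofReal_mul hC0]
    rw [lintegral_const_mul' _ _ ENNReal.ofReal_ne_top]
    exact (ENNReal.mul_lt_top ENNReal.ofReal_lt_top (hμ (2 * t) (by positivity))).ne
  have hfinal := (ENNReal.tendsto_toReal hfin).comp hlim
  have e1 : (∫⁻ u, ENNReal.ofReal (Real.pi⁻¹ * gaussDensity 2 t (x - u)) ∂μ).toReal =
      Real.pi⁻¹ * (∫⁻ u, ENNReal.ofReal (gaussDensity 2 t (x - u)) ∂μ).toReal := by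
    simp only [ENNReal.ofReal_mul (inv_nonneg.2 hpi.le)]
    rw [lintegral_const_mul' _ _ ENNReal.ofReal_ne_top, ENNReal.toReal_mul,
      ENNReal.toReal_ofReal (inv_nonneg.2 hpi.le)]
  rw [e1] at hfinal
  refine hfinal.congr fun q => ?_
  simp only [Function.comp_apply, div_eq_mul_inv]
  have hLi : 0 ≤ |Real.log ‖(2:ℝ)⁻¹ • (q.1 - q.2)‖|⁻¹ := by positivity
  simp only [ENNReal.ofReal_mul' hLi]
  rw [lintegral_mul_const' _ _ ENNReal.ofReal_ne_top, ENNReal.toReal_mul,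
    ENNReal.toReal_ofReal hLi]
end

section
/- There exists a universal constant c > 0 (the same constant as in the asymptotics (μ * q_t)(x₁, x₂) ~ c (μ * p_t)(x) |log |r|| as x₁, x₂ → x, with r = (x₁ - x₂)/2) such that the following holds. Let μ be a σ-finite Borel measure on ℝ² with μ p_s < ∞ for all s > 0, let t > 0, and let f ≥ 0 be a bounded measurable function on ℝ² × ℝ² with bounded support. Define g_t(x₁, x₂) = (μ * p_t)(x₁)(μ * p_t)(x₂) + (μ * q_t)(x₁, x₂). Then ε^{-4} |log ε|^{-1} ∫_{ℝ²×ℝ²} f(u/ε) g_t(u) du → c · (μ p_t) · ∫_{ℝ²×ℝ²} f dλ⁴ as ε → 0, where λ⁴ denotes Lebesgue measure on ℝ⁴ ≅ ℝ² × ℝ². -/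
open Filter MeasureTheory

lemma gauss_square (s τ : ℝ) (hs : 0 < s) (hτ : 0 < τ) (x₁ x₂ u : E2) :
    -‖u‖ ^ 2 / (2 * s) + -‖x₁ - u‖ ^ 2 / (2 * τ) + -‖x₂ - u‖ ^ 2 / (2 * τ)
      = -(1 / (2 * s) + 1 / τ) *
          ‖u - (2 * s / (2 * s + τ)) • ((2:ℝ)⁻¹ • (x₁ + x₂))‖ ^ 2
        + (-‖(2:ℝ)⁻¹ • (x₁ - x₂)‖ ^ 2 / τ + -‖(2:ℝ)⁻¹ • (x₁ + x₂)‖ ^ 2 / (2 * s + τ)) := by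
  have h1 : 2 * s + τ ≠ 0 := by positivity
  simp only [EuclideanSpace.norm_sq_eq, Fin.sum_univ_two, PiLp.sub_apply, PiLp.add_apply,
    PiLp.smul_apply, smul_eq_mul, Real.norm_eq_abs, sq_abs]
  field_simp
  ring

lemma gauss_inner (s τ : ℝ) (hs : 0 < s) (hτ : 0 < τ) (x₁ x₂ : E2) :
    ∫ u, gaussDensity 2 s u * gaussDensity 2 τ (x₁ - u) * gaussDensity 2 τ (x₂ - u)
      = (4 * Real.pi * τ)⁻¹ * Real.exp (-‖(2:ℝ)⁻¹ • (x₁ - x₂)‖ ^ 2 / τ) *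
        ((Real.pi * (2 * s + τ))⁻¹ *
          Real.exp (-‖(2:ℝ)⁻¹ • (x₁ + x₂)‖ ^ 2 / (2 * s + τ))) := by
  have hb : 0 < 1 / (2 * s) + 1 / τ := by positivity
  have key : ∀ u : E2,
      gaussDensity 2 s u * gaussDensity 2 τ (x₁ - u) * gaussDensity 2 τ (x₂ - u)
      = ((2 * Real.pi * s)⁻¹ * (2 * Real.pi * τ)⁻¹ * (2 * Real.pi * τ)⁻¹ *
        (Real.exp (-‖(2:ℝ)⁻¹ • (x₁ - x₂)‖ ^ 2 / τ) *
          Real.exp (-‖(2:ℝ)⁻¹ • (x₁ + x₂)‖ ^ 2 / (2 * s + τ)))) *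
        Real.exp (-(1 / (2 * s) + 1 / τ) *
          ‖u - (2 * s / (2 * s + τ)) • ((2:ℝ)⁻¹ • (x₁ + x₂))‖ ^ 2) := by
    intro u
    rw [gd2, gd2, gd2, ← Real.exp_add]
    have := congrArg Real.exp (gauss_square s τ hs hτ x₁ x₂ u)
    rw [Real.exp_add, Real.exp_add, Real.exp_add] at this
    linear_combination ((2 * Real.pi * s)⁻¹ * (2 * Real.pi * τ)⁻¹ * (2 * Real.pi * τ)⁻¹) * this
  simp_rw [key]
  rw [integral_const_mul, integral_sub_right_eq_self
    (fun u : E2 => Real.exp (-(1 / (2 * s) + 1 / τ) * ‖u‖ ^ 2)),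
    GaussianFourier.integral_rexp_neg_mul_sq_norm hb]
  simp only [finrank_euclideanSpace, Fintype.card_fin]
  rw [show (((2:ℕ):ℝ) / 2) = 1 by norm_num, Real.rpow_one]
  have h1 : 2 * s + τ ≠ 0 := by positivity
  have := Real.pi_ne_zero
  field_simp
  ring

/-- the integrand of `gaussQ` -/
noncomputable def qint (t ρ y s : ℝ) : ℝ :=
  (4 * Real.pi * (t - s))⁻¹ * Real.exp (-ρ ^ 2 / (t - s)) *
    ((Real.pi * (t + s))⁻¹ * Real.exp (-y ^ 2 / (t + s)))

lemma gaussQ_eq_s9 (t : ℝ) (x₁ x₂ : E2) :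
    gaussQ 2 t x₁ x₂ = 2 * ∫ s in Set.Ioo (0:ℝ) t,
      qint t ‖(2:ℝ)⁻¹ • (x₁ - x₂)‖ ‖(2:ℝ)⁻¹ • (x₁ + x₂)‖ s := by
  unfold gaussQ
  rw [integral_Ioc_eq_integral_Ioo]
  congr 1
  apply setIntegral_congr_fun measurableSet_Ioo
  intro s hs
  simp only
  rw [gauss_inner s (t - s) hs.1 (sub_pos.2 hs.2), qint]
  rw [show 2 * s + (t - s) = t + s by ring]

lemma qint_nonneg (t ρ y s : ℝ) (hs : s ∈ Set.Ioo (0:ℝ) t) : 0 ≤ qint t ρ y s := by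
  have h1 : 0 < t - s := sub_pos.2 hs.2
  have h2 : 0 < t + s := by linarith [hs.1, hs.2]
  unfold qint
  positivity

lemma gaussQ_nonneg (t : ℝ) (x₁ x₂ : E2) : 0 ≤ gaussQ 2 t x₁ x₂ := by
  rw [gaussQ_eq_s9]
  have := setIntegral_nonneg (μ := volume) measurableSet_Ioo
    (fun s hs => qint_nonneg t ‖(2:ℝ)⁻¹ • (x₁ - x₂)‖ ‖(2:ℝ)⁻¹ • (x₁ + x₂)‖ s hs)
  positivity

lemma gaussQ_measurable (t : ℝ) : Measurable (fun p : E2 × E2 => gaussQ 2 t p.1 p.2) := by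
  simp_rw [gaussQ_eq_s9]
  apply Measurable.const_mul
  apply StronglyMeasurable.measurable
  apply StronglyMeasurable.integral_prod_right
    (f := fun (p : E2 × E2) s => qint t ‖(2:ℝ)⁻¹ • (p.1 - p.2)‖ ‖(2:ℝ)⁻¹ • (p.1 + p.2)‖ s)
  apply Measurable.stronglyMeasurable
  unfold Function.uncurry qint
  fun_prop

/-- the integrand after the substitution `s = t - exp (-2 a l)` -/
noncomputable def kint (t l y a : ℝ) : ℝ :=
  Set.indicator {a : ℝ | Real.exp (-(2 * a * l)) < t}
    (fun a => Real.pi⁻¹ * Real.exp (-Real.exp (2 * l * (a - 1))) *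
      ((Real.pi * (2 * t - Real.exp (-(2 * a * l))))⁻¹ *
        Real.exp (-y ^ 2 / (2 * t - Real.exp (-(2 * a * l)))))) a

lemma q_subst (t l y : ℝ) (hl : 0 < l) :
    2 * ∫ s in Set.Ioo (0:ℝ) t, qint t (Real.exp (-l)) y s = l * ∫ a, kint t l y a := by
  have himg : (fun a : ℝ => t - Real.exp (-(2 * a * l))) '' Set.univ = Set.Iio t := by
    ext s
    simp only [Set.image_univ, Set.mem_range, Set.mem_Iio]
    constructor
    · rintro ⟨a, rfl⟩
      linarith [Real.exp_pos (-(2 * a * l))]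
    · intro h
      refine ⟨-Real.log (t - s) / (2 * l), ?_⟩
      have : -(2 * (-Real.log (t - s) / (2 * l)) * l) = Real.log (t - s) := by field_simp
      rw [this, Real.exp_log (by linarith)]
      ring
  have hinj : Set.InjOn (fun a : ℝ => t - Real.exp (-(2 * a * l))) Set.univ := by
    intro a _ b _ h
    have h1 : Real.exp (-(2 * a * l)) = Real.exp (-(2 * b * l)) := by
      simp only at h; linarith
    have h2 := Real.exp_injective h1
    have h3 : (a - b) * l = 0 := by linarith
    rcases mul_eq_zero.1 h3 with h | h
    · linarith
    · exact absurd h hl.ne'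
  have hder : ∀ a ∈ (Set.univ : Set ℝ), HasDerivWithinAt
      (fun a : ℝ => t - Real.exp (-(2 * a * l))) (2 * l * Real.exp (-(2 * a * l))) Set.univ a := by
    intro a _
    apply HasDerivAt.hasDerivWithinAt
    have h1 : HasDerivAt (fun a : ℝ => -(2 * a * l)) (-(2 * 1 * l)) a :=
      (((hasDerivAt_id a).const_mul 2).mul_const l).neg
    convert (h1.exp).const_sub t using 1
    ring
  have h0 : ∫ s in Set.Ioo (0:ℝ) t, qint t (Real.exp (-l)) y s
      = ∫ s in Set.Iio t, Set.indicator (Set.Ioi 0) (qint t (Real.exp (-l)) y) s := by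
    rw [setIntegral_indicator measurableSet_Ioi, Set.inter_comm, Set.Ioi_inter_Iio]
  rw [h0, ← himg, integral_image_eq_integral_abs_deriv_smul MeasurableSet.univ hder hinj]
  rw [setIntegral_univ, ← integral_const_mul, ← integral_const_mul]
  congr 1
  ext a
  unfold kint
  by_cases ha : Real.exp (-(2 * a * l)) < t
  · rw [Set.indicator_of_mem (by simpa using ha), Set.indicator_of_mem (by simpa using ha)]
    unfold qint
    set e := Real.exp (-(2 * a * l)) with he
    have hep : 0 < e := Real.exp_pos _
    have h1 : t - (t - e) = e := by ring
    have h2 : t + (t - e) = 2 * t - e := by ring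
    have h3 : -Real.exp (-l) ^ 2 / e = -Real.exp (2 * l * (a - 1)) := by
      rw [neg_div, he, ← Real.exp_nat_mul, ← Real.exp_sub]
      congr 2
      push_cast
      ring
    have h4 : 2 * t - e ≠ 0 := by linarith
    rw [h1, h2, h3, abs_of_pos (by positivity), smul_eq_mul]
    have := Real.pi_ne_zero
    field_simp
    ring
  · rw [Set.indicator_of_notMem (by simpa using ha), Set.indicator_of_notMem (by simpa using ha)]
    simp

lemma kint_meas (t l y : ℝ) : Measurable (kint t l y) := by
  unfold kint
  apply Measurable.indicator
  · fun_prop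
  · exact measurableSet_lt (by fun_prop) measurable_const

lemma kint_nonneg (t l y a : ℝ) (ht : 0 < t) : 0 ≤ kint t l y a := by
  unfold kint
  apply Set.indicator_nonneg
  intro a ha
  have : 0 < 2 * t - Real.exp (-(2 * a * l)) := by
    simp only [Set.mem_ofPred_eq] at ha
    linarith
  positivity

lemma kint_bound (t l y a : ℝ) (ht : 0 < t) (hl : 1 ≤ l) :
    kint t l y a ≤ (Real.pi⁻¹ * (Real.pi * t)⁻¹ * Real.exp (-y ^ 2 / (2 * t))) *
      Set.indicator (Set.Ioi (-|Real.log t|)) (fun a => Real.exp (1 - a)) a := by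
  unfold kint
  by_cases ha : Real.exp (-(2 * a * l)) < t
  · have ha' : a ∈ Set.Ioi (-|Real.log t|) := by
      simp only [Set.mem_Ioi]
      by_contra hcon
      push Not at hcon
      have h1 : -(2 * a * l) < Real.log t := by
        rw [Real.lt_log_iff_exp_lt ht]; exact ha
      have h2 := le_abs_self (Real.log t)
      nlinarith [abs_nonneg (Real.log t)]
    rw [Set.indicator_of_mem (by simpa using ha), Set.indicator_of_mem ha']
    set e := Real.exp (-(2 * a * l)) with he
    have hep : 0 < e := Real.exp_pos _
    have h1 : Real.exp (-Real.exp (2 * l * (a - 1))) ≤ Real.exp (1 - a) := by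
      apply Real.exp_le_exp.2
      rcases le_total a 1 with h | h
      · linarith [Real.exp_pos (2 * l * (a - 1))]
      · have := Real.add_one_le_exp (2 * l * (a - 1))
        nlinarith
    have h2 : (Real.pi * (2 * t - e))⁻¹ ≤ (Real.pi * t)⁻¹ := by
      apply inv_anti₀ (by positivity)
      have := Real.pi_pos
      nlinarith
    have h3 : Real.exp (-y ^ 2 / (2 * t - e)) ≤ Real.exp (-y ^ 2 / (2 * t)) := by
      apply Real.exp_le_exp.2
      rw [neg_div, neg_div, neg_le_neg_iff]
      apply div_le_div_of_nonneg_left (by positivity) (by linarith) (by linarith)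
    have h4 : 0 < 2 * t - e := by linarith
    calc _ ≤ Real.pi⁻¹ * Real.exp (1 - a) * ((Real.pi * t)⁻¹ * Real.exp (-y ^ 2 / (2 * t))) := by
          gcongr
      _ = _ := by ring
  · rw [Set.indicator_of_notMem (by simpa using ha)]
    apply mul_nonneg (by positivity)
    apply Set.indicator_nonneg
    intro a _
    positivity

lemma kdom_integrable (t : ℝ) :
    Integrable (Set.indicator (Set.Ioi (-|Real.log t|)) (fun a : ℝ => Real.exp (1 - a))) := by
  rw [integrable_indicator_iff measurableSet_Ioi]
  have : IntegrableOn (fun a : ℝ => Real.exp 1 * Real.exp (-a)) (Set.Ioi (-|Real.log t|)) :=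
    (integrableOn_exp_neg_Ioi (-|Real.log t|)).const_mul (Real.exp 1)
  refine this.congr_fun ?_ measurableSet_Ioi
  intro a _
  simp only
  rw [← Real.exp_add, sub_eq_add_neg]

lemma kint_lim {ι : Type*} {F : Filter ι} (t : ℝ) (ht : 0 < t) (l y : ι → ℝ) (y0 : ℝ)
    (hl : Tendsto l F atTop) (hy : Tendsto y F (nhds y0)) (a : ℝ) (h0 : a ≠ 0) (h1 : a ≠ 1) :
    Tendsto (fun i => kint t (l i) (y i) a) F
      (nhds (Set.indicator (Set.Ioo (0:ℝ) 1)
        (fun _ => Real.pi⁻¹ * ((2 * Real.pi * t)⁻¹ * Real.exp (-y0 ^ 2 / (2 * t)))) a)) := by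
  rcases lt_or_gt_of_ne h0 with ha | ha
  · rw [Set.indicator_of_notMem (by simp [ha.le])]
    have h2 : Tendsto (fun i => Real.exp (-(2 * a * l i))) F atTop := by
      apply Real.tendsto_exp_atTop.comp
      have := hl.const_mul_atTop (show 0 < -(2 * a) by linarith)
      refine this.congr fun i => by ring
    apply tendsto_const_nhds.congr'
    filter_upwards [h2.eventually_ge_atTop t] with i hi
    unfold kint
    rw [Set.indicator_of_notMem (by simpa using hi)]
  · have h2 : Tendsto (fun i => Real.exp (-(2 * a * l i))) F (nhds 0) := by
      apply Real.tendsto_exp_neg_atTop_nhds_zero.comp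
      exact hl.const_mul_atTop (show 0 < 2 * a by linarith)
    have h3 : Tendsto (fun i => (Real.pi * (2 * t - Real.exp (-(2 * a * l i))))⁻¹ *
        Real.exp (-y i ^ 2 / (2 * t - Real.exp (-(2 * a * l i))))) F
        (nhds ((Real.pi * (2 * t - 0))⁻¹ * Real.exp (-y0 ^ 2 / (2 * t - 0)))) := by
      have h4 : Tendsto (fun i => 2 * t - Real.exp (-(2 * a * l i))) F (nhds (2 * t - 0)) :=
        tendsto_const_nhds.sub h2
      apply Tendsto.mul
      · apply Tendsto.inv₀ (tendsto_const_nhds.mul h4)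
        have := Real.pi_pos
        rw [sub_zero]; positivity
      · apply (Real.continuous_exp.tendsto _).comp
        apply Tendsto.div (hy.pow 2).neg h4
        rw [sub_zero]; positivity
    rw [sub_zero] at h3
    have h5 : ∀ᶠ i in F, Real.pi⁻¹ * Real.exp (-Real.exp (2 * l i * (a - 1))) *
      ((Real.pi * (2 * t - Real.exp (-(2 * a * l i))))⁻¹ *
        Real.exp (-y i ^ 2 / (2 * t - Real.exp (-(2 * a * l i))))) = kint t (l i) (y i) a := by
      filter_upwards [h2.eventually_lt_const ht] with i hi
      unfold kint
      rw [Set.indicator_of_mem (by simpa using hi)]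
    apply Tendsto.congr' h5
    rcases lt_or_gt_of_ne h1 with hb | hb
    · rw [Set.indicator_of_mem (by simp [ha, hb])]
      have h6 : Tendsto (fun i => Real.exp (-Real.exp (2 * l i * (a - 1)))) F (nhds 1) := by
        have : Tendsto (fun i => Real.exp (2 * l i * (a - 1))) F (nhds 0) := by
          have := Real.tendsto_exp_neg_atTop_nhds_zero.comp
            (hl.const_mul_atTop (show 0 < 2 * (1 - a) by linarith))
          refine this.congr fun i => ?_
          simp only [Function.comp]
          congr 1
          ring
        have h7 := (Real.continuous_exp.tendsto _).comp this.neg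
        simpa [Function.comp_def] using h7
      have h8 := (tendsto_const_nhds (x := Real.pi⁻¹)).mul h6 |>.mul h3
      convert h8 using 2
      rw [mul_one]
      congr 3
      ring
    · rw [Set.indicator_of_notMem (by simp [hb.le])]
      have h6 : Tendsto (fun i => Real.exp (-Real.exp (2 * l i * (a - 1)))) F (nhds 0) := by
        apply Real.tendsto_exp_neg_atTop_nhds_zero.comp
        apply Real.tendsto_exp_atTop.comp
        have := hl.const_mul_atTop (show 0 < 2 * (a - 1) by linarith)
        refine this.congr fun i => by ring
      have h8 := (tendsto_const_nhds (x := Real.pi⁻¹)).mul h6 |>.mul h3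
      convert h8 using 2
      ring

lemma kintegral_lim {ι : Type*} {F : Filter ι} [F.IsCountablyGenerated] (t : ℝ) (ht : 0 < t)
    (l y : ι → ℝ) (y0 : ℝ)
    (hl : Tendsto l F atTop) (hy : Tendsto y F (nhds y0)) :
    Tendsto (fun i => ∫ a, kint t (l i) (y i) a) F
      (nhds (Real.pi⁻¹ * ((2 * Real.pi * t)⁻¹ * Real.exp (-y0 ^ 2 / (2 * t))))) := by
  have h : Tendsto (fun i => ∫ a, kint t (l i) (y i) a) F
      (nhds (∫ a, (Set.indicator (Set.Ioo (0:ℝ) 1)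
        (fun _ => Real.pi⁻¹ * ((2 * Real.pi * t)⁻¹ * Real.exp (-y0 ^ 2 / (2 * t)))) a))) := by
    apply tendsto_integral_filter_of_dominated_convergence
      (fun a => (Real.pi⁻¹ * (Real.pi * t)⁻¹) *
        Set.indicator (Set.Ioi (-|Real.log t|)) (fun a => Real.exp (1 - a)) a)
    · exact Eventually.of_forall fun i => (kint_meas _ _ _).aestronglyMeasurable
    · filter_upwards [hl.eventually_ge_atTop 1] with i hi
      refine Eventually.of_forall fun a => ?_
      rw [Real.norm_eq_abs, abs_of_nonneg (kint_nonneg _ _ _ _ ht)]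
      refine (kint_bound t (l i) (y i) a ht hi).trans ?_
      apply mul_le_mul_of_nonneg_right
      · apply mul_le_of_le_one_right (by positivity)
        apply Real.exp_le_one_iff.2
        rw [neg_div]
        have : 0 ≤ y i ^ 2 / (2 * t) := by positivity
        linarith
      · apply Set.indicator_nonneg
        intro a _
        positivity
    · exact (kdom_integrable t).const_mul _
    · have h1 : ∀ᵐ a : ℝ, a ≠ 0 := Measure.ae_ne volume 0
      have h2 : ∀ᵐ a : ℝ, a ≠ 1 := Measure.ae_ne volume 1
      filter_upwards [h1, h2] with a ha hb
      exact kint_lim t ht l y y0 hl hy a ha hb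
  convert h using 2
  rw [integral_indicator measurableSet_Ioo]
  simp

lemma gaussQ_eq_kint (t : ℝ) (x₁ x₂ : E2) (hne : x₁ ≠ x₂)
    (hl : 0 < -Real.log ‖(2:ℝ)⁻¹ • (x₁ - x₂)‖) :
    gaussQ 2 t x₁ x₂ = (-Real.log ‖(2:ℝ)⁻¹ • (x₁ - x₂)‖) *
      ∫ a, kint t (-Real.log ‖(2:ℝ)⁻¹ • (x₁ - x₂)‖) ‖(2:ℝ)⁻¹ • (x₁ + x₂)‖ a := by
  rw [gaussQ_eq_s9, ← q_subst _ _ _ hl, neg_neg, Real.exp_log]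
  rw [norm_pos_iff]
  simpa [sub_eq_zero] using hne

lemma gaussQ_bound_s9 (t : ℝ) (ht : 0 < t) : ∃ K : ℝ, 0 ≤ K ∧ ∀ x₁ x₂ : E2, x₁ ≠ x₂ →
    1 ≤ -Real.log ‖(2:ℝ)⁻¹ • (x₁ - x₂)‖ →
    gaussQ 2 t x₁ x₂ ≤ K * (-Real.log ‖(2:ℝ)⁻¹ • (x₁ - x₂)‖) *
      Real.exp (-‖(2:ℝ)⁻¹ • (x₁ + x₂)‖ ^ 2 / (2 * t)) := by
  set J := ∫ a, Set.indicator (Set.Ioi (-|Real.log t|)) (fun a : ℝ => Real.exp (1 - a)) a with hJ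
  have hJ0 : 0 ≤ J := integral_nonneg fun a =>
    Set.indicator_nonneg (fun a _ => (Real.exp_pos _).le) a
  refine ⟨Real.pi⁻¹ * (Real.pi * t)⁻¹ * J, by positivity, ?_⟩
  intro x₁ x₂ hne hl
  rw [gaussQ_eq_kint t x₁ x₂ hne (by linarith)]
  set l := -Real.log ‖(2:ℝ)⁻¹ • (x₁ - x₂)‖
  set y := ‖(2:ℝ)⁻¹ • (x₁ + x₂)‖
  have h1 : ∫ a, kint t l y a ≤
      (Real.pi⁻¹ * (Real.pi * t)⁻¹ * Real.exp (-y ^ 2 / (2 * t))) * J := by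
    rw [hJ, ← integral_const_mul]
    apply integral_mono_of_nonneg
    · exact Eventually.of_forall fun a => kint_nonneg _ _ _ _ ht
    · exact (kdom_integrable t).const_mul _
    · exact Eventually.of_forall fun a => kint_bound t l y a ht hl
  calc l * ∫ a, kint t l y a
      ≤ l * ((Real.pi⁻¹ * (Real.pi * t)⁻¹ * Real.exp (-y ^ 2 / (2 * t))) * J) := by
        apply mul_le_mul_of_nonneg_left h1; linarith
    _ = _ := by ring

lemma gaussQ_lim {ι : Type*} {F : Filter ι} [F.IsCountablyGenerated] (t : ℝ) (ht : 0 < t)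
    (x₁ x₂ : ι → E2) (z : E2) (h1 : Tendsto x₁ F (nhds z)) (h2 : Tendsto x₂ F (nhds z))
    (hne : ∀ᶠ i in F, x₁ i ≠ x₂ i)
    (hlog : Tendsto (fun i => -Real.log ‖(2:ℝ)⁻¹ • (x₁ i - x₂ i)‖) F atTop) :
    Tendsto (fun i => gaussQ 2 t (x₁ i) (x₂ i) / (-Real.log ‖(2:ℝ)⁻¹ • (x₁ i - x₂ i)‖)) F
      (nhds (Real.pi⁻¹ * gaussDensity 2 t z)) := by
  have hm : Tendsto (fun i => ‖(2:ℝ)⁻¹ • (x₁ i + x₂ i)‖) F (nhds ‖z‖) := by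
    have := ((h1.add h2).const_smul (2:ℝ)⁻¹).norm
    rwa [← two_smul ℝ z, smul_smul, inv_mul_cancel₀ (by norm_num : (2:ℝ) ≠ 0), one_smul] at this
  have := kintegral_lim t ht _ _ _ hlog hm
  rw [gd2]
  apply this.congr'
  filter_upwards [hne, hlog.eventually_ge_atTop 1] with i hi hl
  rw [gaussQ_eq_kint t _ _ hi (by linarith), mul_div_cancel_left₀]
  linarith

lemma log_tendsto {ι : Type*} {F : Filter ι}
    (x₁ x₂ : ι → E2) (z : E2) (h1 : Tendsto x₁ F (nhds z)) (h2 : Tendsto x₂ F (nhds z))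
    (hne : ∀ᶠ i in F, x₁ i ≠ x₂ i) :
    Tendsto (fun i => -Real.log ‖(2:ℝ)⁻¹ • (x₁ i - x₂ i)‖) F atTop := by
  apply tendsto_neg_atBot_atTop.comp
  apply Real.tendsto_log_nhdsGT_zero.comp
  rw [tendsto_nhdsWithin_iff]
  constructor
  · have := ((h1.sub h2).const_smul (2:ℝ)⁻¹).norm
    simpa using this
  · filter_upwards [hne] with i hi
    simp only [Set.mem_Ioi, norm_pos_iff]
    simpa [sub_eq_zero] using hi

lemma exp_dom (t : ℝ) (ht : 0 < t) (m u : E2) :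
    Real.exp (-‖m - u‖ ^ 2 / (2 * t)) ≤
      Real.exp (‖m‖ ^ 2 / (2 * t)) * Real.exp (-‖u‖ ^ 2 / (4 * t)) := by
  rw [← Real.exp_add]
  apply Real.exp_le_exp.2
  have h1 : ‖u‖ ≤ ‖m - u‖ + ‖m‖ := by
    have := norm_sub_le m (m - u)
    simp at this
    linarith
  have h2 : ‖u‖ ^ 2 ≤ 2 * ‖m - u‖ ^ 2 + 2 * ‖m‖ ^ 2 := by
    nlinarith [norm_nonneg u, norm_nonneg m, norm_nonneg (m - u), sq_nonneg (‖m - u‖ - ‖m‖)]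
  rw [← sub_nonneg]
  have : ‖m‖ ^ 2 / (2 * t) + -‖u‖ ^ 2 / (4 * t) - -‖m - u‖ ^ 2 / (2 * t)
      = (2 * ‖m - u‖ ^ 2 + 2 * ‖m‖ ^ 2 - ‖u‖ ^ 2) / (4 * t) := by
    field_simp; ring
  rw [this]
  apply div_nonneg <;> linarith

lemma gd_nonneg (t : ℝ) (ht : 0 < t) (x : E2) : 0 ≤ gaussDensity 2 t x := by
  rw [gd2]; positivity

lemma gd_meas (t : ℝ) : Measurable (gaussDensity 2 t) := by
  have : gaussDensity 2 t = fun x => (2 * Real.pi * t)⁻¹ * Real.exp (-‖x‖ ^ 2 / (2 * t)) :=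
    funext (gd2 t)
  rw [this]
  fun_prop

lemma dom_integrable (μ : Measure E2)
    (hμ : ∀ s : ℝ, 0 < s → ∫⁻ u, ENNReal.ofReal (gaussDensity 2 s u) ∂μ < ⊤) (t : ℝ)
    (ht : 0 < t) : Integrable (fun u : E2 => Real.exp (-‖u‖ ^ 2 / (4 * t))) μ := by
  have h : Integrable (gaussDensity 2 (2 * t)) μ := by
    refine ⟨(gd_meas _).aestronglyMeasurable, ?_⟩
    rw [hasFiniteIntegral_iff_ofReal
      (Eventually.of_forall fun u => gd_nonneg _ (by positivity) u)]
    exact hμ (2 * t) (by positivity)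
  refine (h.const_mul (2 * Real.pi * (2 * t))).congr (Eventually.of_forall fun u => ?_)
  simp only
  rw [gd2, ← mul_assoc, mul_inv_cancel₀ (by positivity), one_mul]
  congr 2
  ring

lemma toReal_eq (μ : Measure E2) (g : E2 → ℝ) (hg : Measurable g) (h0 : ∀ u, 0 ≤ g u) :
    (∫⁻ u, ENNReal.ofReal (g u) ∂μ).toReal = ∫ u, g u ∂μ :=
  (integral_eq_lintegral_of_nonneg_ae (Eventually.of_forall h0) hg.aestronglyMeasurable).symm

lemma gaussQ_meas' (t : ℝ) (x₁ x₂ : E2) :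
    Measurable (fun u => gaussQ 2 t (x₁ - u) (x₂ - u)) := by
  have h : Measurable (fun u : E2 => (x₁ - u, x₂ - u)) :=
    (measurable_const.sub measurable_id).prodMk (measurable_const.sub measurable_id)
  have h2 := (gaussQ_measurable t).comp h
  simpa only [Function.comp_def] using h2

lemma half_add (x₁ x₂ u : E2) :
    (2:ℝ)⁻¹ • ((x₁ - u) + (x₂ - u)) = (2:ℝ)⁻¹ • (x₁ + x₂) - u := by
  module

/-- domination of `q` by an integrable function of `u` -/
lemma gaussQ_dom (t : ℝ) (ht : 0 < t) (R : ℝ) : ∃ K : ℝ, 0 ≤ K ∧ ∀ x₁ x₂ : E2, x₁ ≠ x₂ →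
    1 ≤ -Real.log ‖(2:ℝ)⁻¹ • (x₁ - x₂)‖ → ‖(2:ℝ)⁻¹ • (x₁ + x₂)‖ ≤ R → ∀ u,
    gaussQ 2 t (x₁ - u) (x₂ - u) ≤ K * (-Real.log ‖(2:ℝ)⁻¹ • (x₁ - x₂)‖) *
      Real.exp (-‖u‖ ^ 2 / (4 * t)) := by
  obtain ⟨K, hK, hb⟩ := gaussQ_bound_s9 t ht
  refine ⟨K * Real.exp (R ^ 2 / (2 * t)), by positivity, ?_⟩
  intro x₁ x₂ hne hl hR u
  have h := hb (x₁ - u) (x₂ - u) (by simpa using hne) (by simpa using hl)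
  rw [half_add, sub_sub_sub_cancel_right] at h
  refine h.trans ?_
  have h2 := exp_dom t ht ((2:ℝ)⁻¹ • (x₁ + x₂)) u
  have h3 : Real.exp (‖(2:ℝ)⁻¹ • (x₁ + x₂)‖ ^ 2 / (2 * t)) ≤ Real.exp (R ^ 2 / (2 * t)) := by
    gcongr
  calc _ ≤ K * (-Real.log ‖(2:ℝ)⁻¹ • (x₁ - x₂)‖) *
        (Real.exp (R ^ 2 / (2 * t)) * Real.exp (-‖u‖ ^ 2 / (4 * t))) := by
        apply mul_le_mul_of_nonneg_left
        · exact h2.trans (by gcongr)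
        · apply mul_nonneg hK; linarith
    _ = _ := by ring

lemma part_one {ι : Type*} {F : Filter ι} [F.IsCountablyGenerated] (μ : Measure E2)
    (hμ : ∀ s : ℝ, 0 < s → ∫⁻ u, ENNReal.ofReal (gaussDensity 2 s u) ∂μ < ⊤) (t : ℝ)
    (ht : 0 < t)
    (x₁ x₂ : ι → E2) (z : E2) (h1 : Tendsto x₁ F (nhds z)) (h2 : Tendsto x₂ F (nhds z))
    (hne : ∀ᶠ i in F, x₁ i ≠ x₂ i) :
    Tendsto (fun i => (∫⁻ u, ENNReal.ofReal (gaussQ 2 t (x₁ i - u) (x₂ i - u)) ∂μ).toReal /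
      |Real.log ‖(2:ℝ)⁻¹ • (x₁ i - x₂ i)‖|) F
      (nhds (Real.pi⁻¹ * (∫⁻ u, ENNReal.ofReal (gaussDensity 2 t (z - u)) ∂μ).toReal)) := by
  have hlog := log_tendsto x₁ x₂ z h1 h2 hne
  have hm : Tendsto (fun i => ‖(2:ℝ)⁻¹ • (x₁ i + x₂ i)‖) F (nhds ‖z‖) := by
    have := ((h1.add h2).const_smul (2:ℝ)⁻¹).norm
    rwa [← two_smul ℝ z, smul_smul, inv_mul_cancel₀ (by norm_num : (2:ℝ) ≠ 0), one_smul] at this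
  rw [toReal_eq μ (fun u => gaussDensity 2 t (z - u)) ((gd_meas t).comp (by fun_prop))
    (fun u => gd_nonneg t ht _), ← integral_const_mul]
  obtain ⟨K, hK, hb⟩ := gaussQ_dom t ht (‖z‖ + 1)
  have key : Tendsto (fun i => ∫ u, gaussQ 2 t (x₁ i - u) (x₂ i - u) /
      (-Real.log ‖(2:ℝ)⁻¹ • (x₁ i - x₂ i)‖) ∂μ) F
      (nhds (∫ u, Real.pi⁻¹ * gaussDensity 2 t (z - u) ∂μ)) := by
    apply tendsto_integral_filter_of_dominated_convergence
      (fun u => K * Real.exp (-‖u‖ ^ 2 / (4 * t)))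
    · exact Eventually.of_forall fun i => ((gaussQ_meas' t _ _).div_const _).aestronglyMeasurable
    · filter_upwards [hne, hlog.eventually_ge_atTop 1,
        hm.eventually_le_const (lt_add_one _)] with i h1 h2 h3
      refine Eventually.of_forall fun u => ?_
      rw [Real.norm_eq_abs, abs_of_nonneg (div_nonneg (gaussQ_nonneg _ _ _) (by linarith)),
        div_le_iff₀ (by linarith)]
      refine (hb _ _ h1 h2 h3 u).trans (le_of_eq (by ring))
    · exact (dom_integrable μ hμ t ht).const_mul K
    · refine Eventually.of_forall fun u => ?_
      have := gaussQ_lim (F := F) t ht (fun i => x₁ i - u) (fun i => x₂ i - u) (z - u)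
        (h1.sub_const u) (h2.sub_const u) (by simpa using hne) (by simpa using hlog)
      simpa using this
  apply key.congr'
  filter_upwards [hlog.eventually_ge_atTop 1] with i hi
  rw [toReal_eq μ _ (gaussQ_meas' t _ _) (fun u => gaussQ_nonneg _ _ _), integral_div,
    abs_of_nonpos (by linarith)]

lemma mup_bound (μ : Measure E2)
    (hμ : ∀ s : ℝ, 0 < s → ∫⁻ u, ENNReal.ofReal (gaussDensity 2 s u) ∂μ < ⊤) (t : ℝ)
    (ht : 0 < t) (R : ℝ) : ∃ K : ℝ, 0 ≤ K ∧ ∀ x : E2, ‖x‖ ≤ R →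
      (∫⁻ v, ENNReal.ofReal (gaussDensity 2 t (x - v)) ∂μ).toReal ≤ K := by
  refine ⟨∫ u, (2 * Real.pi * t)⁻¹ * Real.exp (R ^ 2 / (2 * t)) *
    Real.exp (-‖u‖ ^ 2 / (4 * t)) ∂μ, integral_nonneg fun u => by positivity, ?_⟩
  intro x hx
  rw [toReal_eq μ (fun u => gaussDensity 2 t (x - u)) ((gd_meas t).comp (by fun_prop))
    (fun u => gd_nonneg t ht _)]
  apply integral_mono_of_nonneg
  · exact Eventually.of_forall fun u => gd_nonneg t ht _
  · exact (dom_integrable μ hμ t ht).const_mul _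
  · refine Eventually.of_forall fun u => ?_
    simp only
    rw [gd2, mul_assoc (2 * Real.pi * t)⁻¹]
    have h3 : Real.exp (‖x‖ ^ 2 / (2 * t)) ≤ Real.exp (R ^ 2 / (2 * t)) := by
      gcongr
    apply mul_le_mul_of_nonneg_left _ (by positivity)
    exact (exp_dom t ht x u).trans (by gcongr)

lemma muq_bound (μ : Measure E2)
    (hμ : ∀ s : ℝ, 0 < s → ∫⁻ u, ENNReal.ofReal (gaussDensity 2 s u) ∂μ < ⊤) (t : ℝ)
    (ht : 0 < t) (R : ℝ) : ∃ K : ℝ, 0 ≤ K ∧ ∀ x₁ x₂ : E2, x₁ ≠ x₂ →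
    1 ≤ -Real.log ‖(2:ℝ)⁻¹ • (x₁ - x₂)‖ → ‖(2:ℝ)⁻¹ • (x₁ + x₂)‖ ≤ R →
      (∫⁻ v, ENNReal.ofReal (gaussQ 2 t (x₁ - v) (x₂ - v)) ∂μ).toReal
        ≤ K * (-Real.log ‖(2:ℝ)⁻¹ • (x₁ - x₂)‖) := by
  obtain ⟨K, hK, hb⟩ := gaussQ_dom t ht R
  refine ⟨K * ∫ u, Real.exp (-‖u‖ ^ 2 / (4 * t)) ∂μ,
    mul_nonneg hK (integral_nonneg fun u => by positivity), ?_⟩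
  intro x₁ x₂ hne hl hR
  rw [toReal_eq μ _ (gaussQ_meas' t _ _) (fun u => gaussQ_nonneg _ _ _), mul_right_comm,
    ← integral_const_mul]
  apply integral_mono_of_nonneg
  · exact Eventually.of_forall fun u => gaussQ_nonneg t _ _
  · exact (dom_integrable μ hμ t ht).const_mul _
  · exact Eventually.of_forall fun u => hb x₁ x₂ hne hl hR u

lemma log_integrable (A B R : ℝ) : Integrable (fun z : E2 =>
    Set.indicator (Set.Iic R) (fun y => A + B * |Real.log (2⁻¹ * y)|) ‖z‖) := by
  rw [integrable_fun_norm_addHaar volume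
    (f := Set.indicator (Set.Iic R) (fun y => A + B * |Real.log (2⁻¹ * y)|))]
  have hc : Continuous (fun y : ℝ => A * y + 2 * B * |(2⁻¹ * y) * Real.log (2⁻¹ * y)|) := by
    have := Real.continuous_mul_log.comp (continuous_const_mul (2⁻¹:ℝ))
    exact (continuous_const_mul A).add (continuous_const.mul this.abs)
  have h1 : IntegrableOn (fun y : ℝ => A * y + 2 * B * |(2⁻¹ * y) * Real.log (2⁻¹ * y)|)
      (Set.Ioc 0 R) := (hc.integrableOn_Icc (a := 0) (b := R)).mono_set Set.Ioc_subset_Icc_self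
  have h2 : IntegrableOn (Set.indicator (Set.Iic R)
      (fun y : ℝ => A * y + 2 * B * |(2⁻¹ * y) * Real.log (2⁻¹ * y)|)) (Set.Ioi 0) := by
    rw [IntegrableOn, integrable_indicator_iff measurableSet_Iic, IntegrableOn,
      Measure.restrict_restrict measurableSet_Iic, Set.inter_comm, Set.Ioi_inter_Iic]
    exact h1
  refine h2.congr_fun ?_ measurableSet_Ioi
  intro y hy
  have hy : 0 < y := hy
  simp only [finrank_euclideanSpace, Fintype.card_fin]
  by_cases hyR : y ∈ Set.Iic R
  · rw [Set.indicator_of_mem hyR, Set.indicator_of_mem hyR, abs_mul, abs_of_pos (by positivity),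
      smul_eq_mul]
    norm_num
    ring
  · rw [Set.indicator_of_notMem hyR, Set.indicator_of_notMem hyR, smul_zero]

lemma prod_log_integrable (A B R : ℝ) : Integrable (fun w : E2 × E2 =>
    Set.indicator (Metric.closedBall (0:E2) R) (fun _ => (1:ℝ)) w.2 *
    Set.indicator (Set.Iic (2 * R)) (fun y => A + B * |Real.log (2⁻¹ * y)|) ‖w.1 - w.2‖) := by
  have h1 : Integrable (Set.indicator (Metric.closedBall (0:E2) R) (fun _ => (1:ℝ))) := by
    rw [integrable_indicator_iff measurableSet_closedBall]
    exact integrableOn_const (measure_closedBall_lt_top.ne)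
  exact Integrable.convolution_integrand (ContinuousLinearMap.mul ℝ ℝ) h1
    (log_integrable A B (2 * R))

lemma G_meas (μ : Measure E2) [SigmaFinite μ] (t : ℝ) : Measurable (fun u : E2 × E2 =>
    (∫⁻ v, ENNReal.ofReal (gaussDensity 2 t (u.1 - v)) ∂μ).toReal *
        (∫⁻ v, ENNReal.ofReal (gaussDensity 2 t (u.2 - v)) ∂μ).toReal +
      (∫⁻ v, ENNReal.ofReal (gaussQ 2 t (u.1 - v) (u.2 - v)) ∂μ).toReal) := by
  have hP : Measurable (fun x : E2 => ∫⁻ v, ENNReal.ofReal (gaussDensity 2 t (x - v)) ∂μ) := by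
    apply Measurable.lintegral_prod_right'
      (f := fun (p : E2 × E2) => ENNReal.ofReal (gaussDensity 2 t (p.1 - p.2)))
    exact ((gd_meas t).comp (measurable_fst.sub measurable_snd)).ennreal_ofReal
  have hQ : Measurable (fun u : E2 × E2 =>
      ∫⁻ v, ENNReal.ofReal (gaussQ 2 t (u.1 - v) (u.2 - v)) ∂μ) := by
    apply Measurable.lintegral_prod_right'
      (f := fun (p : (E2 × E2) × E2) => ENNReal.ofReal (gaussQ 2 t (p.1.1 - p.2) (p.1.2 - p.2)))
    have h : Measurable (fun p : (E2 × E2) × E2 => (p.1.1 - p.2, p.1.2 - p.2)) :=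
      ((measurable_fst.comp measurable_fst).sub measurable_snd).prodMk
        ((measurable_snd.comp measurable_fst).sub measurable_snd)
    exact (Measurable.comp (g := fun p : E2 × E2 => gaussQ 2 t p.1 p.2)
      (gaussQ_measurable t) h).ennreal_ofReal
  exact ((hP.comp measurable_fst).ennreal_toReal.mul
    (hP.comp measurable_snd).ennreal_toReal).add hQ.ennreal_toReal

lemma ae_ne_diag : ∀ᵐ w : E2 × E2, w.1 ≠ w.2 := by
  have hm : MeasurableSet {w : E2 × E2 | w.1 ≠ w.2} :=
    (measurableSet_eq_fun measurable_fst measurable_snd).compl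
  have h := (Measure.ae_prod_iff_ae_ae (μ := (volume : Measure E2)) (ν := (volume : Measure E2))
    (p := fun w : E2 × E2 => w.1 ≠ w.2) hm).2
    (Eventually.of_forall fun x => by
      filter_upwards [Measure.ae_ne (volume : Measure E2) x] with y hy
      exact hy.symm)
  exact h

lemma G_lim (μ : Measure E2)
    (hμ : ∀ s : ℝ, 0 < s → ∫⁻ u, ENNReal.ofReal (gaussDensity 2 s u) ∂μ < ⊤) (t : ℝ)
    (ht : 0 < t) (w : E2 × E2) (hw : w.1 ≠ w.2) :
    Tendsto (fun ε : ℝ => |Real.log ε|⁻¹ *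
      ((∫⁻ v, ENNReal.ofReal (gaussDensity 2 t ((ε • w).1 - v)) ∂μ).toReal *
        (∫⁻ v, ENNReal.ofReal (gaussDensity 2 t ((ε • w).2 - v)) ∂μ).toReal +
      (∫⁻ v, ENNReal.ofReal (gaussQ 2 t ((ε • w).1 - v) ((ε • w).2 - v)) ∂μ).toReal))
      (nhdsWithin 0 (Set.Ioi (0:ℝ)))
      (nhds (Real.pi⁻¹ * (∫⁻ u, ENNReal.ofReal (gaussDensity 2 t u) ∂μ).toReal)) := by
  have hid : Tendsto (fun ε : ℝ => ε) (nhdsWithin 0 (Set.Ioi (0:ℝ))) (nhds 0) :=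
    tendsto_nhdsWithin_of_tendsto_nhds tendsto_id
  have hpos : ∀ᶠ ε : ℝ in nhdsWithin 0 (Set.Ioi (0:ℝ)), 0 < ε := self_mem_nhdsWithin
  have hlog : Tendsto (fun ε : ℝ => -Real.log ε) (nhdsWithin 0 (Set.Ioi (0:ℝ))) atTop :=
    tendsto_neg_atBot_atTop.comp Real.tendsto_log_nhdsGT_zero
  have hinv : Tendsto (fun ε : ℝ => |Real.log ε|⁻¹) (nhdsWithin 0 (Set.Ioi (0:ℝ))) (nhds 0) :=
    (tendsto_abs_atBot_atTop.comp Real.tendsto_log_nhdsGT_zero).inv_tendsto_atTop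
  have h1 : Tendsto (fun ε : ℝ => ε • w.1) (nhdsWithin 0 (Set.Ioi (0:ℝ))) (nhds 0) := by
    simpa using hid.smul_const w.1
  have h2 : Tendsto (fun ε : ℝ => ε • w.2) (nhdsWithin 0 (Set.Ioi (0:ℝ))) (nhds 0) := by
    simpa using hid.smul_const w.2
  have hne : ∀ᶠ ε : ℝ in nhdsWithin 0 (Set.Ioi (0:ℝ)), ε • w.1 ≠ ε • w.2 := by
    filter_upwards [hpos] with ε hε h
    exact hw (smul_right_injective E2 hε.ne' h)
  have hq := part_one μ hμ t ht _ _ 0 h1 h2 hne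
  have e0 : (fun u : E2 => ENNReal.ofReal (gaussDensity 2 t (0 - u)))
      = fun u => ENNReal.ofReal (gaussDensity 2 t u) := by
    ext u
    rw [gd2, gd2, zero_sub, norm_neg]
  rw [e0] at hq
  -- ratio of logs
  set ρ := ‖(2:ℝ)⁻¹ • (w.1 - w.2)‖ with hρ
  have hρ0 : 0 < ρ := by
    rw [hρ, norm_pos_iff]
    simpa [sub_eq_zero] using hw
  have hnorm : ∀ ε : ℝ, 0 < ε → ‖(2:ℝ)⁻¹ • (ε • w.1 - ε • w.2)‖ = ε * ρ := by
    intro ε hε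
    rw [← smul_sub, smul_comm, norm_smul, Real.norm_of_nonneg hε.le]
  have hlog2 := log_tendsto _ _ 0 h1 h2 hne
  have hratio : Tendsto (fun ε : ℝ => |Real.log ‖(2:ℝ)⁻¹ • (ε • w.1 - ε • w.2)‖| *
      |Real.log ε|⁻¹) (nhdsWithin 0 (Set.Ioi (0:ℝ))) (nhds 1) := by
    have h3 : Tendsto (fun ε : ℝ => 1 + -Real.log ρ * |Real.log ε|⁻¹)
        (nhdsWithin 0 (Set.Ioi (0:ℝ))) (nhds (1 + -Real.log ρ * 0)) :=
      tendsto_const_nhds.add (tendsto_const_nhds.mul hinv)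
    rw [mul_zero, add_zero] at h3
    apply h3.congr'
    filter_upwards [hpos, hlog.eventually_ge_atTop 1, hlog2.eventually_ge_atTop 1] with ε hε ha hb
    rw [abs_of_nonpos (by linarith : Real.log ‖(2:ℝ)⁻¹ • (ε • w.1 - ε • w.2)‖ ≤ 0),
      hnorm ε hε, Real.log_mul hε.ne' hρ0.ne', abs_of_nonpos (by linarith : Real.log ε ≤ 0)]
    have : Real.log ε ≠ 0 := by intro h; linarith
    field_simp
  have hQ := hq.mul hratio
  rw [mul_one] at hQ
  obtain ⟨K, hK, hb⟩ := mup_bound μ hμ t ht 1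
  have hP : Tendsto (fun ε : ℝ => |Real.log ε|⁻¹ *
      ((∫⁻ v, ENNReal.ofReal (gaussDensity 2 t ((ε • w).1 - v)) ∂μ).toReal *
        (∫⁻ v, ENNReal.ofReal (gaussDensity 2 t ((ε • w).2 - v)) ∂μ).toReal))
      (nhdsWithin 0 (Set.Ioi (0:ℝ))) (nhds 0) := by
    have hup : Tendsto (fun ε : ℝ => |Real.log ε|⁻¹ * (K * K))
      (nhdsWithin 0 (Set.Ioi (0:ℝ))) (nhds 0) := by simpa using hinv.mul_const (K * K)
    apply tendsto_of_tendsto_of_tendsto_of_le_of_le' tendsto_const_nhds hup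
    · exact Eventually.of_forall fun ε => by positivity
    · have n1 : ∀ᶠ ε : ℝ in nhdsWithin 0 (Set.Ioi (0:ℝ)), ‖ε • w.1‖ ≤ 1 :=
        (by simpa using h1.norm : Tendsto _ _ (nhds (0:ℝ))).eventually_le_const one_pos
      have n2 : ∀ᶠ ε : ℝ in nhdsWithin 0 (Set.Ioi (0:ℝ)), ‖ε • w.2‖ ≤ 1 :=
        (by simpa using h2.norm : Tendsto _ _ (nhds (0:ℝ))).eventually_le_const one_pos
      filter_upwards [n1, n2] with ε a b
      have ha := hb _ a
      have hb' := hb _ b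
      apply mul_le_mul_of_nonneg_left _ (by positivity)
      exact mul_le_mul ha hb' ENNReal.toReal_nonneg hK
  have hfin := hP.add hQ
  rw [zero_add] at hfin
  apply hfin.congr'
  filter_upwards [hlog2.eventually_ge_atTop 1] with ε hε
  have hne0 : |Real.log ‖(2:ℝ)⁻¹ • (ε • w.1 - ε • w.2)‖| ≠ 0 := by
    rw [abs_ne_zero]; intro h; linarith
  rw [mul_add]
  congr 1
  simp only [Prod.smul_fst, Prod.smul_snd]
  generalize |Real.log ‖(2:ℝ)⁻¹ • (ε • w.1 - ε • w.2)‖| = b at hne0 ⊢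
  rw [← mul_assoc, div_mul_cancel₀ _ hne0, mul_comm]

lemma G_dom (μ : Measure E2)
    (hμ : ∀ s : ℝ, 0 < s → ∫⁻ u, ENNReal.ofReal (gaussDensity 2 s u) ∂μ < ⊤) (t : ℝ)
    (ht : 0 < t) (R : ℝ) (hR : 0 < R) : ∃ A B : ℝ, 0 ≤ A ∧ 0 ≤ B ∧
    ∀ᶠ ε : ℝ in nhdsWithin 0 (Set.Ioi (0:ℝ)), ∀ w : E2 × E2, w.1 ≠ w.2 → ‖w‖ ≤ R →
      |Real.log ε|⁻¹ *
      ((∫⁻ v, ENNReal.ofReal (gaussDensity 2 t ((ε • w).1 - v)) ∂μ).toReal *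
        (∫⁻ v, ENNReal.ofReal (gaussDensity 2 t ((ε • w).2 - v)) ∂μ).toReal +
      (∫⁻ v, ENNReal.ofReal (gaussQ 2 t ((ε • w).1 - v) ((ε • w).2 - v)) ∂μ).toReal)
      ≤ A + B * |Real.log (2⁻¹ * ‖w.1 - w.2‖)| := by
  obtain ⟨K, hK, hb⟩ := mup_bound μ hμ t ht R
  obtain ⟨L, hL, hbL⟩ := muq_bound μ hμ t ht R
  refine ⟨K * K + L, L, by positivity, hL, ?_⟩
  have hlog : Tendsto (fun ε : ℝ => -Real.log ε) (nhdsWithin 0 (Set.Ioi (0:ℝ))) atTop :=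
    tendsto_neg_atBot_atTop.comp Real.tendsto_log_nhdsGT_zero
  have hpos : ∀ᶠ ε : ℝ in nhdsWithin 0 (Set.Ioi (0:ℝ)), 0 < ε := self_mem_nhdsWithin
  filter_upwards [hpos, hlog.eventually_ge_atTop 1,
    hlog.eventually_ge_atTop (1 + Real.log R)] with ε hε h1 h2 w hne hw
  have hε1 : ε ≤ 1 := by
    have : Real.log ε ≤ 0 := by linarith
    exact (Real.log_nonpos_iff hε.le).1 this
  have hw1 : ‖w.1‖ ≤ R := (norm_fst_le w).trans hw
  have hw2 : ‖w.2‖ ≤ R := (norm_snd_le w).trans hw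
  have hs : ∀ x : E2, ‖x‖ ≤ R → ‖ε • x‖ ≤ R := by
    intro x hx
    rw [norm_smul, Real.norm_of_nonneg hε.le]
    nlinarith [norm_nonneg x]
  have hρ0 : 0 < 2⁻¹ * ‖w.1 - w.2‖ := by
    have : 0 < ‖w.1 - w.2‖ := norm_pos_iff.2 (sub_ne_zero.2 hne)
    positivity
  have hnorm : ‖(2:ℝ)⁻¹ • (ε • w.1 - ε • w.2)‖ = ε * (2⁻¹ * ‖w.1 - w.2‖) := by
    rw [← smul_sub, smul_comm, norm_smul, norm_smul, Real.norm_of_nonneg hε.le,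
      Real.norm_of_nonneg (by norm_num : (0:ℝ) ≤ 2⁻¹)]
  have hρR : 2⁻¹ * ‖w.1 - w.2‖ ≤ R := by
    have := norm_sub_le w.1 w.2
    linarith
  have hlogρ : Real.log (2⁻¹ * ‖w.1 - w.2‖) ≤ Real.log R := Real.log_le_log hρ0 hρR
  have hl1 : Real.log ‖(2:ℝ)⁻¹ • (ε • w.1 - ε • w.2)‖
      = Real.log ε + Real.log (2⁻¹ * ‖w.1 - w.2‖) := by
    rw [hnorm, Real.log_mul hε.ne' hρ0.ne']
  have hmid : ‖(2:ℝ)⁻¹ • (ε • w.1 + ε • w.2)‖ ≤ R := by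
    rw [norm_smul, Real.norm_of_nonneg (by norm_num : (0:ℝ) ≤ 2⁻¹)]
    have := norm_add_le (ε • w.1) (ε • w.2)
    have := hs _ hw1
    have := hs _ hw2
    linarith
  have hQ := hbL (ε • w.1) (ε • w.2) (fun h => hne (smul_right_injective E2 hε.ne' h))
    (by rw [hl1]; linarith) hmid
  rw [hl1] at hQ
  have hP := mul_le_mul (hb _ (hs _ hw1)) (hb _ (hs _ hw2)) ENNReal.toReal_nonneg hK
  have hneg := neg_le_abs (Real.log (2⁻¹ * ‖w.1 - w.2‖))
  simp only [Prod.smul_fst, Prod.smul_snd]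
  rw [abs_of_nonpos (by linarith : Real.log ε ≤ 0), inv_mul_le_iff₀ (by linarith)]
  set l := -Real.log ε with hl
  set a := |Real.log (2⁻¹ * ‖w.1 - w.2‖)| with ha
  have ha0 : 0 ≤ a := abs_nonneg _
  have hKK : K * K ≤ l * (K * K) := le_mul_of_one_le_left (by positivity) h1
  have hLa : L * a ≤ l * (L * a) := le_mul_of_one_le_left (by positivity) h1
  have hQ2 : L * -(Real.log ε + Real.log (2⁻¹ * ‖w.1 - w.2‖)) ≤ L * (l + a) := by
    apply mul_le_mul_of_nonneg_left _ hL
    linarith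
  calc _ ≤ K * K + L * (l + a) := add_le_add hP (hQ.trans hQ2)
    _ ≤ _ := by linarith

lemma part_two (μ : Measure E2) [SigmaFinite μ]
    (hμ : ∀ s : ℝ, 0 < s → ∫⁻ u, ENNReal.ofReal (gaussDensity 2 s u) ∂μ < ⊤) (t : ℝ)
    (ht : 0 < t) (f : E2 × E2 → ℝ) (hf : Measurable f) (hf0 : ∀ u, 0 ≤ f u)
    (hfM : ∃ M : ℝ, ∀ u, f u ≤ M) (hfs : Bornology.IsBounded (Function.support f)) :
    Tendsto
      (fun ε : ℝ =>
        (ε ^ 4)⁻¹ * |Real.log ε|⁻¹ *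
          ∫ u : E2 × E2,
            f (ε⁻¹ • u) *
              ((∫⁻ v, ENNReal.ofReal (gaussDensity 2 t (u.1 - v)) ∂μ).toReal *
                  (∫⁻ v, ENNReal.ofReal (gaussDensity 2 t (u.2 - v)) ∂μ).toReal +
                (∫⁻ v, ENNReal.ofReal (gaussQ 2 t (u.1 - v) (u.2 - v)) ∂μ).toReal))
      (nhdsWithin 0 (Set.Ioi (0:ℝ)))
      (nhds (Real.pi⁻¹ * (∫⁻ u, ENNReal.ofReal (gaussDensity 2 t u) ∂μ).toReal *
        ∫ u : E2 × E2, f u)) := by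
  obtain ⟨M, hM⟩ := hfM
  have hM0 : 0 ≤ M := (hf0 0).trans (hM 0)
  obtain ⟨R, hR, hsub⟩ := hfs.subset_closedBall_lt 0 0
  obtain ⟨A, B, hA, hB, hdom⟩ := G_dom μ hμ t ht R hR
  have hGm := G_meas μ t
  have hlim := fun w hw => G_lim μ hμ t ht w hw
  have hG0 : ∀ u : E2 × E2, 0 ≤ (∫⁻ v, ENNReal.ofReal (gaussDensity 2 t (u.1 - v)) ∂μ).toReal *
      (∫⁻ v, ENNReal.ofReal (gaussDensity 2 t (u.2 - v)) ∂μ).toReal +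
    (∫⁻ v, ENNReal.ofReal (gaussQ 2 t (u.1 - v) (u.2 - v)) ∂μ).toReal := fun u => by positivity
  generalize hG : (fun u : E2 × E2 =>
    (∫⁻ v, ENNReal.ofReal (gaussDensity 2 t (u.1 - v)) ∂μ).toReal *
        (∫⁻ v, ENNReal.ofReal (gaussDensity 2 t (u.2 - v)) ∂μ).toReal +
      (∫⁻ v, ENNReal.ofReal (gaussQ 2 t (u.1 - v) (u.2 - v)) ∂μ).toReal) = G at hGm
  have hGe := fun u : E2 × E2 => congrFun hG u
  simp only [hGe] at hdom hlim hG0 ⊢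
  clear hG hGe
  have key : Tendsto (fun ε : ℝ => ∫ w : E2 × E2, f w * (|Real.log ε|⁻¹ * G (ε • w)))
      (nhdsWithin 0 (Set.Ioi (0:ℝ)))
      (nhds (∫ w : E2 × E2, f w *
        (Real.pi⁻¹ * (∫⁻ u, ENNReal.ofReal (gaussDensity 2 t u) ∂μ).toReal))) := by
    apply tendsto_integral_filter_of_dominated_convergence
      (fun w : E2 × E2 => M * (Set.indicator (Metric.closedBall (0:E2) R) (fun _ => (1:ℝ)) w.2 *
        Set.indicator (Set.Iic (2 * R)) (fun y => A + B * |Real.log (2⁻¹ * y)|) ‖w.1 - w.2‖))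
    · refine Eventually.of_forall fun ε => ?_
      have h1 : Measurable (fun w : E2 × E2 => G (ε • w)) := hGm.comp (measurable_const_smul ε)
      exact (hf.mul (h1.const_mul _)).aestronglyMeasurable
    · filter_upwards [hdom] with ε hε
      filter_upwards [ae_ne_diag] with w hw
      have hn : 0 ≤ |Real.log ε|⁻¹ * G (ε • w) := mul_nonneg (by positivity) (hG0 _)
      rw [Real.norm_of_nonneg (mul_nonneg (hf0 w) hn)]
      by_cases hfw : f w = 0
      · rw [hfw, zero_mul]
        apply mul_nonneg hM0
        apply mul_nonneg
        · exact Set.indicator_nonneg (fun _ _ => zero_le_one) _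
        · apply Set.indicator_nonneg
          intro y _
          positivity
      · have hwR : ‖w‖ ≤ R := by simpa using hsub hfw
        have hw1 : ‖w.1‖ ≤ R := (norm_fst_le w).trans hwR
        have hw2 : ‖w.2‖ ≤ R := (norm_snd_le w).trans hwR
        rw [Set.indicator_of_mem (by simpa using hw2), one_mul, Set.indicator_of_mem]
        · exact mul_le_mul (hM w) (hε w hw hwR) hn hM0
        · have := norm_sub_le w.1 w.2
          simp only [Set.mem_Iic]
          linarith
    · exact (prod_log_integrable A B R).const_mul M
    · filter_upwards [ae_ne_diag] with w hw
      exact (hlim w hw).const_mul (f w)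
  rw [integral_mul_const, mul_comm] at key
  apply key.congr'
  have hpos : ∀ᶠ ε : ℝ in nhdsWithin 0 (Set.Ioi (0:ℝ)), 0 < ε := self_mem_nhdsWithin
  filter_upwards [hpos] with ε hε
  haveI : (volume : Measure (E2 × E2)).IsAddHaarMeasure :=
    inferInstanceAs ((volume : Measure E2).prod (volume : Measure E2)).IsAddHaarMeasure
  have hcv := Measure.integral_comp_inv_smul_of_nonneg (volume : Measure (E2 × E2))
    (fun w => f w * G (ε • w)) hε.le
  have hfin : Module.finrank ℝ (E2 × E2) = 4 := by
    rw [Module.finrank_prod, finrank_euclideanSpace, Fintype.card_fin]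
  rw [hfin] at hcv
  simp only [smul_inv_smul₀ hε.ne'] at hcv
  rw [hcv, smul_eq_mul]
  have : ∀ w, f w * (|Real.log ε|⁻¹ * G (ε • w)) = |Real.log ε|⁻¹ * (f w * G (ε • w)) :=
    fun w => by ring
  simp_rw [this]
  rw [integral_const_mul]
  field_simp

/-- **Lemma 3.4.** There is a universal constant `c > 0` — the same constant as in the
asymptotics `(μ * q_t)(x₁, x₂) ~ c (μ * p_t)(x) |log |r||` — such that for every σ-finite
`μ` on `ℝ²` with `μ p_s < ∞` for all `s > 0`, every `t > 0`, and every bounded measurable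
`f ≥ 0` on `ℝ² × ℝ²` with bounded support, writing
`g_t(x₁, x₂) = (μ * p_t)(x₁)(μ * p_t)(x₂) + (μ * q_t)(x₁, x₂)` for the second-moment
density, one has
`ε^{-4} |log ε|⁻¹ ∫ f(u/ε) g_t(u) du → c (μ p_t) ∫ f dλ⁴` as `ε → 0+`. -/
theorem gauss_second_moment_scaling_dim_two :
    ∃ c : ℝ, 0 < c ∧
      (∀ (μ : Measure (EuclideanSpace ℝ (Fin 2))), SigmaFinite μ →
        (∀ s : ℝ, 0 < s → ∫⁻ u, ENNReal.ofReal (gaussDensity 2 s u) ∂μ < ⊤) →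
        ∀ t : ℝ, 0 < t → ∀ x : EuclideanSpace ℝ (Fin 2),
        Tendsto
          (fun q : EuclideanSpace ℝ (Fin 2) × EuclideanSpace ℝ (Fin 2) =>
            (∫⁻ u, ENNReal.ofReal (gaussQ 2 t (q.1 - u) (q.2 - u)) ∂μ).toReal /
              |Real.log ‖(2:ℝ)⁻¹ • (q.1 - q.2)‖|)
          (nhdsWithin (x, x)
            {q : EuclideanSpace ℝ (Fin 2) × EuclideanSpace ℝ (Fin 2) | q.1 ≠ q.2})
          (nhds (c * (∫⁻ u, ENNReal.ofReal (gaussDensity 2 t (x - u)) ∂μ).toReal))) ∧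
      (∀ (μ : Measure (EuclideanSpace ℝ (Fin 2))), SigmaFinite μ →
        (∀ s : ℝ, 0 < s → ∫⁻ u, ENNReal.ofReal (gaussDensity 2 s u) ∂μ < ⊤) →
        ∀ t : ℝ, 0 < t →
        ∀ f : EuclideanSpace ℝ (Fin 2) × EuclideanSpace ℝ (Fin 2) → ℝ,
        Measurable f → (∀ u, 0 ≤ f u) → (∃ M : ℝ, ∀ u, f u ≤ M) →
        Bornology.IsBounded (Function.support f) →
        Tendsto
          (fun ε : ℝ =>
            (ε ^ 4)⁻¹ * |Real.log ε|⁻¹ *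
              ∫ u : EuclideanSpace ℝ (Fin 2) × EuclideanSpace ℝ (Fin 2),
                f (ε⁻¹ • u) *
                  ((∫⁻ v, ENNReal.ofReal (gaussDensity 2 t (u.1 - v)) ∂μ).toReal *
                      (∫⁻ v, ENNReal.ofReal (gaussDensity 2 t (u.2 - v)) ∂μ).toReal +
                    (∫⁻ v, ENNReal.ofReal (gaussQ 2 t (u.1 - v) (u.2 - v)) ∂μ).toReal))
          (nhdsWithin 0 (Set.Ioi (0:ℝ)))
          (nhds (c * (∫⁻ u, ENNReal.ofReal (gaussDensity 2 t u) ∂μ).toReal *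
            ∫ u : EuclideanSpace ℝ (Fin 2) × EuclideanSpace ℝ (Fin 2), f u))) := by

  refine ⟨Real.pi⁻¹, by positivity, ?_, ?_⟩
  · intro μ _ hμ t ht x
    have h1 : Tendsto (fun q : E2 × E2 => q.1) (nhdsWithin (x, x) {q : E2 × E2 | q.1 ≠ q.2})
        (nhds x) := tendsto_nhdsWithin_of_tendsto_nhds (continuous_fst.tendsto (x, x))
    have h2 : Tendsto (fun q : E2 × E2 => q.2) (nhdsWithin (x, x) {q : E2 × E2 | q.1 ≠ q.2})
        (nhds x) := tendsto_nhdsWithin_of_tendsto_nhds (continuous_snd.tendsto (x, x))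
    exact part_one μ hμ t ht _ _ x h1 h2 self_mem_nhdsWithin
  · intro μ _ hμ t ht f hf hf0 hfM hfs
    exact part_two μ hμ t ht f hf hf0 hfM hfs
end

section
/- Let ξ and ξ_n (n ∈ ℕ) be random measures on ℝ^d, defined on a probability space (Ω, 𝒜, P), with locally finite intensity measures E ξ and E ξ_n, and assume ξ is stationary, i.e. ξθ_x has the same distribution as ξ for every x ∈ ℝ^d. Let Q be a probability measure on M_d and let Q^n_s (s ∈ ℝ^d) be probability kernels from ℝ^d to M_d that are versions of the associated shifted Palm distributions, i.e. E ∫ f(s, ξθ_s) ξ(ds) = ∫ E ξ(ds) ∫ f(s, μ) Q(dμ) and E ∫ f(s, ξ_nθ_s) ξ_n(ds) = ∫ E ξ_n(ds) ∫ f(s, μ) Q^n_s(dμ) for all measurable f ≥ 0 on ℝ^d × M_d. Fix a bounded Borel set B ⊂ ℝ^d satisfying, as n → ∞: (i) E ξ_n B → E ξ B > 0; (ii) the total variation of the measure A ↦ E[ξ_n B; ξ_n ∈ A] - E[ξ B; ξ ∈ A] on M_d tends to 0; (iii) sup_{r,s ∈ B} ‖Q^n_r - Q^n_s‖ → 0.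 Then sup_{s ∈ B} ‖Q^n_s - Q‖ → 0 as n → ∞. -/
open Filter MeasureTheory ProbabilityTheory
open scoped ENNReal

/-- The shift `μθ_x` of a measure on `ℝ^d`, given by `(μθ_x)(B) = μ(x + B)`. -/
noncomputable def shiftMeasure {d : ℕ} (μ : Measure (EuclideanSpace ℝ (Fin d)))
    (x : EuclideanSpace ℝ (Fin d)) : Measure (EuclideanSpace ℝ (Fin d)) :=
  Measure.map (fun y => y - x) μ

/-- The total variation norm `‖ν₁ - ν₂‖` of the difference of two finite measures. -/
noncomputable def tvDist {α : Type*} [MeasurableSpace α] (ν₁ ν₂ : Measure α)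
    [IsFiniteMeasure ν₁] [IsFiniteMeasure ν₂] : ℝ≥0∞ :=
  (ν₁.toSignedMeasure - ν₂.toSignedMeasure).totalVariation Set.univ

theorem tv_measure_le {α : Type*} [MeasurableSpace α] (ν₁ ν₂ : Measure α)
    [IsFiniteMeasure ν₁] [IsFiniteMeasure ν₂] :
    ν₁ ≤ ν₂ + (ν₁.toSignedMeasure - ν₂.toSignedMeasure).totalVariation := by
  refine Measure.le_iff.2 fun A hA => ?_
  have h := SignedMeasure.enorm_le_totalVariation (ν₁.toSignedMeasure - ν₂.toSignedMeasure) A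
  rw [Measure.toSignedMeasure_sub_apply hA] at h
  rw [Measure.add_apply]
  refine le_trans ?_ (add_le_add_right h _)
  have h1 : ν₁ A = ENNReal.ofReal (ν₁.real A) := by simp
  have h2 : ν₂ A = ENNReal.ofReal (ν₂.real A) := by simp
  rw [h1, h2, Real.enorm_eq_ofReal_abs, ← ENNReal.ofReal_add (by positivity) (by positivity)]
  apply ENNReal.ofReal_le_ofReal
  linarith [le_abs_self (ν₁.real A - ν₂.real A)]

theorem tvDist_comm' {α : Type*} [MeasurableSpace α] (ν₁ ν₂ : Measure α)
    [IsFiniteMeasure ν₁] [IsFiniteMeasure ν₂] : tvDist ν₁ ν₂ = tvDist ν₂ ν₁ := by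
  unfold tvDist
  rw [← SignedMeasure.totalVariation_neg, neg_sub]

theorem lintegral_le_tv {α : Type*} [MeasurableSpace α] (ν₁ ν₂ : Measure α)
    [IsFiniteMeasure ν₁] [IsFiniteMeasure ν₂] (g : α → ℝ≥0∞) (hg : ∀ x, g x ≤ 1) :
    ∫⁻ x, g x ∂ν₁ ≤ ∫⁻ x, g x ∂ν₂ + tvDist ν₁ ν₂ := by
  calc ∫⁻ x, g x ∂ν₁ ≤ ∫⁻ x, g x ∂(ν₂ + _) := lintegral_mono' (tv_measure_le ν₁ ν₂) le_rfl
    _ = _ := lintegral_add_measure _ _ _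
    _ ≤ _ := by
      gcongr
      refine (lintegral_mono hg).trans ?_
      simp [tvDist]

theorem apply_le_tv {α : Type*} [MeasurableSpace α] (ν₁ ν₂ : Measure α)
    [IsFiniteMeasure ν₁] [IsFiniteMeasure ν₂] (A : Set α) :
    ν₁ A ≤ ν₂ A + tvDist ν₁ ν₂ := by
  refine (tv_measure_le ν₁ ν₂ A).trans ?_
  rw [Measure.add_apply]
  exact add_le_add_right (measure_mono (Set.subset_univ _)) _

theorem tv_le_of_forall {α : Type*} [MeasurableSpace α] (ν₁ ν₂ : Measure α)
    [IsFiniteMeasure ν₁] [IsFiniteMeasure ν₂] (c : ℝ≥0∞)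
    (h1 : ∀ A, MeasurableSet A → ν₁ A ≤ ν₂ A + c)
    (h2 : ∀ A, MeasurableSet A → ν₂ A ≤ ν₁ A + c) : tvDist ν₁ ν₂ ≤ 2 * c := by
  by_cases hc : c = ⊤
  · simp [hc]
  lift c to NNReal using hc
  unfold tvDist
  set s := ν₁.toSignedMeasure - ν₂.toSignedMeasure with hs
  obtain ⟨i, hi₁, hi₂, hi₃, hp, hn⟩ := s.toJordanDecomposition_spec
  have key : ∀ (a b : Measure α) [IsFiniteMeasure a] [IsFiniteMeasure b] (A : Set α),
      a A ≤ b A + c → a.real A - b.real A ≤ c := by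
    intro a b _ _ A h
    have := ENNReal.toReal_mono (by finiteness) h
    rw [ENNReal.toReal_add (by finiteness) (by finiteness)] at this
    simp only [Measure.real, ENNReal.coe_toReal] at *
    linarith
  have e1 : s.toJordanDecomposition.posPart.real Set.univ ≤ c := by
    simp only [hp]
    rw [SignedMeasure.toMeasureOfZeroLE_real_apply _ hi₂ hi₁ MeasurableSet.univ, Set.inter_univ, hs,
      Measure.toSignedMeasure_sub_apply hi₁]
    exact key _ _ _ (h1 _ hi₁)
  have e2 : s.toJordanDecomposition.negPart.real Set.univ ≤ c := by
    simp only [hn]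
    rw [SignedMeasure.toMeasureOfLEZero_real_apply _ hi₃ hi₁.compl MeasurableSet.univ,
      Set.inter_univ, hs, Measure.toSignedMeasure_sub_apply hi₁.compl, neg_sub]
    exact key _ _ _ (h2 _ hi₁.compl)
  have conv : ∀ (a : Measure α) [IsFiniteMeasure a], a.real Set.univ ≤ c → a Set.univ ≤ c := by
    intro a _ h
    have := ENNReal.ofReal_le_ofReal h
    simpa using this
  rw [SignedMeasure.totalVariation, Measure.add_apply, two_mul]
  exact add_le_add (conv _ e1) (conv _ e2)

theorem exists_sfinite_kernel {E : Type*} [MeasurableSpace E] (idx : E → ℕ)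
    (hidx : Measurable idx) :
    ∃ K : Kernel (Measure E) E, IsSFiniteKernel K ∧
      ∀ μ : Measure E, (∀ k, μ (idx ⁻¹' {k}) ≠ ⊤) → K μ = μ := by
  classical
  have hm : ∀ k, MeasurableSet (idx ⁻¹' {k}) := fun k => hidx (measurableSet_singleton k)
  have hN : ∀ p : ℕ × ℕ, MeasurableSet {μ : Measure E | μ (idx ⁻¹' {p.1}) ≠ ⊤ ∧
      ⌊(μ (idx ⁻¹' {p.1})).toReal⌋₊ = p.2} := by
    intro p
    have h0 := Measure.measurable_coe (hm p.1)
    refine MeasurableSet.inter (h0 (measurableSet_singleton ⊤).compl) ?_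
    exact (Nat.measurable_floor.comp h0.ennreal_toReal) (measurableSet_singleton p.2)
  let R : ℕ → Kernel (Measure E) E := fun k =>
    ⟨fun μ => μ.restrict (idx ⁻¹' {k}), by
      refine Measure.measurable_of_measurable_coe _ fun C hC => ?_
      simp_rw [Measure.restrict_apply hC]
      exact Measure.measurable_coe (hC.inter (hm k))⟩
  let F : ℕ × ℕ → Kernel (Measure E) E := fun p => Kernel.piecewise (hN p) (R p.1) 0
  have hF : ∀ p, IsFiniteKernel (F p) := by
    intro p
    refine ⟨⟨(p.2 : ℝ≥0∞) + 1, by finiteness, fun μ => ?_⟩⟩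
    simp only [F, Kernel.piecewise_apply]
    split_ifs with h
    · obtain ⟨h1, h2⟩ := h
      change μ.restrict _ _ ≤ _
      rw [Measure.restrict_apply_univ, ← ENNReal.ofReal_toReal h1]
      have := (Nat.lt_floor_add_one (μ (idx ⁻¹' {p.1})).toReal).le
      rw [h2] at this
      refine (ENNReal.ofReal_le_ofReal this).trans ?_
      rw [ENNReal.ofReal_add (by positivity) (by positivity)]
      simp
    · simp
  refine ⟨Kernel.sum F, inferInstance, fun μ hμ => ?_⟩
  ext C hC
  rw [Kernel.sum_apply' _ _ hC, ENNReal.tsum_prod']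
  have : ∀ k, ∑' j, F (k, j) μ C = μ (C ∩ idx ⁻¹' {k}) := by
    intro k
    rw [tsum_eq_single ⌊(μ (idx ⁻¹' {k})).toReal⌋₊]
    · simp only [F, Kernel.piecewise_apply]
      rw [if_pos ⟨hμ k, rfl⟩]
      exact Measure.restrict_apply hC
    · intro j hj
      simp only [F, Kernel.piecewise_apply]
      rw [if_neg (fun h => hj h.2.symm)]
      simp
  simp_rw [this]
  rw [← measure_iUnion]
  · congr 1
    ext x
    simp
  · intro a b hab
    refine Set.disjoint_left.2 fun x hx hy => hab ?_
    simp only [Set.mem_inter_iff, Set.mem_preimage, Set.mem_singleton_iff] at hx hy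
    exact hx.2.symm.trans hy.2
  · exact fun k => hC.inter (hm k)

theorem lintegral_weighted {E Ω : Type*} [MeasurableSpace E] [MeasurableSpace Ω]
    (P : Measure Ω) (ξ : Ω → Measure E) (hξ : Measurable ξ) (B : Set E) (hB : MeasurableSet B)
    (ν : Measure (Measure E))
    (hν : ∀ A, MeasurableSet A → ν A = ∫⁻ ω in ξ ⁻¹' A, ξ ω B ∂P)
    (g : Measure E → ℝ≥0∞) (hg : Measurable g) :
    ∫⁻ μ, g μ ∂ν = ∫⁻ ω, ξ ω B * g (ξ ω) ∂P := by
  have hb : Measurable fun ω => ξ ω B := (Measure.measurable_coe hB).comp hξ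
  have : ν = (P.withDensity fun ω => ξ ω B).map ξ := by
    ext A hA
    rw [hν A hA, Measure.map_apply hξ hA, withDensity_apply _ (hξ hA)]
  rw [this, lintegral_map hg hξ]
  exact lintegral_withDensity_eq_lintegral_mul _ hb (hg.comp hξ)

theorem exists_density {d : ℕ} (B : Set (EuclideanSpace ℝ (Fin d))) (hB : MeasurableSet B)
    (hBbdd : Bornology.IsBounded B)
    (A : Set (Measure (EuclideanSpace ℝ (Fin d)))) (hA : MeasurableSet A) :
    ∃ g : Measure (EuclideanSpace ℝ (Fin d)) → ℝ≥0∞, (∀ μ, g μ ≤ 1) ∧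
      ∀ {Ω : Type _} [MeasurableSpace Ω] (P : Measure Ω)
      (ξ : Ω → Measure (EuclideanSpace ℝ (Fin d))) (_ : Measurable ξ)
      (Iξ : Measure (EuclideanSpace ℝ (Fin d)))
      (_ : ∀ A : Set (EuclideanSpace ℝ (Fin d)), MeasurableSet A → Iξ A = ∫⁻ ω, ξ ω A ∂P)
      (_ : ∀ A : Set (EuclideanSpace ℝ (Fin d)), Bornology.IsBounded A → Iξ A < ⊤)
      (ν : Measure (Measure (EuclideanSpace ℝ (Fin d))))
      (_ : ∀ A, MeasurableSet A → ν A = ∫⁻ ω in ξ ⁻¹' A, ξ ω B ∂P)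
      (Q : EuclideanSpace ℝ (Fin d) → Measure (Measure (EuclideanSpace ℝ (Fin d))))
      (_ : ∀ f : EuclideanSpace ℝ (Fin d) × Measure (EuclideanSpace ℝ (Fin d)) → ℝ≥0∞,
        Measurable f →
        ∫⁻ ω, ∫⁻ s, f (s, shiftMeasure (ξ ω) s) ∂(ξ ω) ∂P
          = ∫⁻ s, ∫⁻ μ, f (s, μ) ∂(Q s) ∂Iξ),
      ∫⁻ μ, g μ ∂ν = ∫⁻ s in B, Q s A ∂Iξ := by
  classical
  let E := EuclideanSpace ℝ (Fin d)
  let idx : E → ℕ := fun x => ⌊‖x‖⌋₊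
  have hidx : Measurable idx := Nat.measurable_floor.comp measurable_norm
  obtain ⟨K, hK, hKeq⟩ := exists_sfinite_kernel idx hidx
  have hshift : Measurable fun p : Measure E × E => shiftMeasure (K p.1) p.2 := by
    refine Measure.measurable_of_measurable_coe _ fun C hC => ?_
    have hT : MeasurableSet {q : (Measure E × E) × E | q.2 - q.1.2 ∈ C} :=
      (measurable_snd.sub (measurable_snd.comp measurable_fst)) hC
    have := Kernel.measurable_kernel_prodMk_left (κ := K.comap Prod.fst measurable_fst) hT
    convert this using 2 with p
    rw [shiftMeasure, Measure.map_apply (by fun_prop) hC, Kernel.comap_apply]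
    rfl
  let f : E × Measure E → ℝ≥0∞ := (B ×ˢ A).indicator 1
  have hf : Measurable f := measurable_one.indicator (hB.prod hA)
  let h : Measure E → ℝ≥0∞ := fun μ => ∫⁻ s, f (s, shiftMeasure (K μ) s) ∂(K μ)
  have hh : Measurable h := by
    have : Measurable fun p : Measure E × E => f (p.2, shiftMeasure (K p.1) p.2) :=
      hf.comp (measurable_snd.prodMk hshift)
    exact this.lintegral_kernel_prod_right'
  have hgm : Measurable fun μ : Measure E => min (h μ / μ B) 1 :=
    (hh.div (Measure.measurable_coe hB)).min measurable_const
  refine ⟨fun μ => min (h μ / μ B) 1, fun μ => min_le_right _ _, ?_⟩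
  intro Ω _ P ξ hξ Iξ hI hIlf ν hν Q hQ
  rw [lintegral_weighted P ξ hξ B hB ν hν _ hgm]
  have hbd : ∀ C : Set E, MeasurableSet C → Bornology.IsBounded C → ∀ᵐ ω ∂P, ξ ω C < ⊤ := by
    intro C hC hCb
    refine ae_lt_top ((Measure.measurable_coe hC).comp hξ) ?_
    rw [← hI C hC]
    exact (hIlf C hCb).ne
  have hlf : ∀ᵐ ω ∂P, ∀ k, ξ ω (idx ⁻¹' {k}) ≠ ⊤ := by
    refine ae_all_iff.2 fun k => ?_
    have hb : Bornology.IsBounded (idx ⁻¹' {k}) := by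
      refine (Metric.isBounded_closedBall (x := (0 : E)) (r := (k : ℝ) + 1)).subset ?_
      intro x hx
      have hx' : ⌊‖x‖⌋₊ = k := hx
      rw [mem_closedBall_zero_iff, ← hx']
      exact (Nat.lt_floor_add_one _).le
    filter_upwards [hbd _ (hidx (measurableSet_singleton k)) hb] with ω hω using hω.ne
  have hlhs : ∫⁻ ω, ξ ω B * min (h (ξ ω) / ξ ω B) 1 ∂P
      = ∫⁻ ω, ∫⁻ s, f (s, shiftMeasure (ξ ω) s) ∂(ξ ω) ∂P := by
    refine lintegral_congr_ae ?_
    filter_upwards [hlf, hbd B hB hBbdd] with ω h1 h2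
    have hk := hKeq _ h1
    have hle : h (ξ ω) ≤ ξ ω B := by
      simp only [h, hk]
      calc _ ≤ ∫⁻ s, B.indicator 1 s ∂(ξ ω) := by
            refine lintegral_mono fun s => ?_
            by_cases hs : s ∈ B
            · simp only [f, Set.indicator_of_mem hs]
              exact Set.indicator_le_self' (fun _ _ => zero_le) _
            · simp [f, hs]
        _ = _ := lintegral_indicator_one hB
    have h3 : h (ξ ω) / ξ ω B ≤ 1 := ENNReal.div_le_of_le_mul (by simpa using hle)
    rw [min_eq_left h3]
    have h4 : ξ ω B * (h (ξ ω) / ξ ω B) = h (ξ ω) := by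
      by_cases h0 : ξ ω B = 0
      · rw [h0] at hle ⊢
        simp [le_zero_iff.1 hle]
      · exact ENNReal.mul_div_cancel h0 h2.ne
    rw [h4]
    simp only [h, hk]
    rfl
  rw [hlhs, hQ f hf, ← lintegral_indicator hB]
  refine lintegral_congr fun s => ?_
  by_cases hs : s ∈ B
  · rw [Set.indicator_of_mem hs, ← lintegral_indicator_one hA]
    refine lintegral_congr fun μ => ?_
    by_cases hμ : μ ∈ A <;> simp [f, hs, hμ]
  · simp [f, hs]

/-- **Lemma 2.2.** Let `ξ` and `ξₙ` be random measures on `ℝ^d` with locally finite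
intensities `Iξ`, `Iξₙ`, where `ξ` is stationary, and let `Q` and `Qₙ` be versions of the
associated shifted Palm distributions. If, for a bounded Borel set `B`:
(i) `E ξₙ B → E ξ B > 0`; (ii) `‖E[ξₙ B; ξₙ ∈ ·] - E[ξ B; ξ ∈ ·]‖ → 0`;
(iii) `sup_{r,s ∈ B} ‖Qₙ_r - Qₙ_s‖ → 0`; then `sup_{s ∈ B} ‖Qₙ_s - Q‖ → 0`. -/
theorem palm_uniform_convergence {d : ℕ} {Ω : Type*} [MeasurableSpace Ω]
    (P : Measure Ω) [IsProbabilityMeasure P]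
    (ξ : Ω → Measure (EuclideanSpace ℝ (Fin d))) (hξmeas : Measurable ξ)
    (ξn : ℕ → Ω → Measure (EuclideanSpace ℝ (Fin d))) (hξnmeas : ∀ n, Measurable (ξn n))
    -- intensity measures
    (Iξ : Measure (EuclideanSpace ℝ (Fin d)))
    (hIξ : ∀ A : Set (EuclideanSpace ℝ (Fin d)), MeasurableSet A →
      Iξ A = ∫⁻ ω, ξ ω A ∂P)
    (Iξn : ℕ → Measure (EuclideanSpace ℝ (Fin d)))
    (hIξn : ∀ n, ∀ A : Set (EuclideanSpace ℝ (Fin d)), MeasurableSet A →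
      Iξn n A = ∫⁻ ω, ξn n ω A ∂P)
    -- local finiteness of the intensities
    (hIξ_lf : ∀ A : Set (EuclideanSpace ℝ (Fin d)), Bornology.IsBounded A → Iξ A < ⊤)
    (hIξn_lf : ∀ n, ∀ A : Set (EuclideanSpace ℝ (Fin d)), Bornology.IsBounded A →
      Iξn n A < ⊤)
    -- stationarity of ξ: ξθ_x has the same distribution as ξ for every x
    (hstat : ∀ x : EuclideanSpace ℝ (Fin d),
      ∀ A : Set (Measure (EuclideanSpace ℝ (Fin d))), MeasurableSet A →
      P {ω | shiftMeasure (ξ ω) x ∈ A} = P {ω | ξ ω ∈ A})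
    -- Q is a version of the shifted Palm distribution of ξ
    (Q : Measure (Measure (EuclideanSpace ℝ (Fin d)))) [IsProbabilityMeasure Q]
    (hQ : ∀ f : EuclideanSpace ℝ (Fin d) × Measure (EuclideanSpace ℝ (Fin d)) → ℝ≥0∞,
      Measurable f →
      ∫⁻ ω, ∫⁻ s, f (s, shiftMeasure (ξ ω) s) ∂(ξ ω) ∂P
        = ∫⁻ s, ∫⁻ μ, f (s, μ) ∂Q ∂Iξ)
    -- Qₙ are versions of the shifted Palm distributions of ξₙ
    (Qn : ℕ → Kernel (EuclideanSpace ℝ (Fin d)) (Measure (EuclideanSpace ℝ (Fin d))))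
    [∀ n, IsMarkovKernel (Qn n)]
    (hQn : ∀ n, ∀ f : EuclideanSpace ℝ (Fin d) × Measure (EuclideanSpace ℝ (Fin d)) → ℝ≥0∞,
      Measurable f →
      ∫⁻ ω, ∫⁻ s, f (s, shiftMeasure (ξn n ω) s) ∂(ξn n ω) ∂P
        = ∫⁻ s, ∫⁻ μ, f (s, μ) ∂(Qn n s) ∂(Iξn n))
    -- the fixed bounded Borel set B
    (B : Set (EuclideanSpace ℝ (Fin d))) (hB : MeasurableSet B)
    (hBbdd : Bornology.IsBounded B)
    -- condition (i)
    (hi : Tendsto (fun n => Iξn n B) atTop (nhds (Iξ B))) (hIξB_pos : 0 < Iξ B)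
    -- the weighted measures E[ξ B; ξ ∈ ·] and E[ξₙ B; ξₙ ∈ ·], and condition (ii)
    (ν : Measure (Measure (EuclideanSpace ℝ (Fin d)))) [IsFiniteMeasure ν]
    (hν : ∀ A : Set (Measure (EuclideanSpace ℝ (Fin d))), MeasurableSet A →
      ν A = ∫⁻ ω in ξ ⁻¹' A, ξ ω B ∂P)
    (νn : ℕ → Measure (Measure (EuclideanSpace ℝ (Fin d)))) [∀ n, IsFiniteMeasure (νn n)]
    (hνn : ∀ n, ∀ A : Set (Measure (EuclideanSpace ℝ (Fin d))), MeasurableSet A →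
      νn n A = ∫⁻ ω in (ξn n) ⁻¹' A, ξn n ω B ∂P)
    (hii : Tendsto (fun n => tvDist (νn n) ν) atTop (nhds 0))
    -- condition (iii)
    (hiii : Tendsto (fun n => ⨆ r ∈ B, ⨆ s ∈ B, tvDist (Qn n r) (Qn n s))
      atTop (nhds 0)) :
    Tendsto (fun n => ⨆ s ∈ B, tvDist (Qn n s) Q) atTop (nhds 0) := by
  set a := Iξ B with ha
  have haf : a ≠ ⊤ := (hIξ_lf B hBbdd).ne
  set ε : ℕ → ℝ≥0∞ := fun n => ⨆ r ∈ B, ⨆ s ∈ B, tvDist (Qn n r) (Qn n s) with hε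
  have hεle : ∀ n, ∀ r ∈ B, ∀ s ∈ B, ∀ A, Qn n r A ≤ Qn n s A + ε n := by
    intro n r hr s hs A
    refine (apply_le_tv (Qn n r) (Qn n s) A).trans ?_
    gcongr
    exact le_iSup₂_of_le r hr (le_iSup₂_of_le s hs le_rfl)
  let c : ℕ → ℝ≥0∞ := fun n =>
    (tvDist (νn n) ν + ε n * Iξn n B + ((a - Iξn n B) + (Iξn n B - a))) / a
  have hc : Tendsto (fun n => 2 * c n) atTop (nhds 0) := by
    have t1 : Tendsto (fun n => ε n * Iξn n B) atTop (nhds (0 * a)) :=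
      ENNReal.Tendsto.mul hiii (Or.inr haf) hi (Or.inr ENNReal.zero_ne_top)
    have t2 : Tendsto (fun n => a - Iξn n B) atTop (nhds (a - a)) :=
      ENNReal.Tendsto.sub tendsto_const_nhds hi (Or.inl haf)
    have t3 : Tendsto (fun n => Iξn n B - a) atTop (nhds (a - a)) :=
      ENNReal.Tendsto.sub hi tendsto_const_nhds (Or.inl haf)
    have t4 := ENNReal.Tendsto.div_const ((hii.add t1).add (t2.add t3)) (b := a)
      (Or.inr hIξB_pos.ne')
    have t5 := ENNReal.Tendsto.const_mul (a := 2) t4 (Or.inr (by simp))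
    simpa using t5
  refine tendsto_of_tendsto_of_tendsto_of_le_of_le tendsto_const_nhds hc (fun n => zero_le) ?_
  intro n
  refine iSup₂_le fun s hs => ?_
  have main : ∀ A, MeasurableSet A → Qn n s A ≤ Q A + c n ∧ Q A ≤ Qn n s A + c n := by
    intro A hA
    obtain ⟨g, hg1, hg⟩ := exists_density B hB hBbdd A hA
    have e1 := hg P ξ hξmeas Iξ hIξ hIξ_lf ν hν (fun _ => Q) hQ
    have e2 := hg P (ξn n) (hξnmeas n) (Iξn n) (hIξn n) (hIξn_lf n) (νn n) (hνn n)
      (fun s => Qn n s) (hQn n)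
    rw [setLIntegral_const] at e1
    have i1 := lintegral_le_tv (νn n) ν g hg1
    have i2 := lintegral_le_tv ν (νn n) g hg1
    rw [tvDist_comm' ν (νn n)] at i2
    rw [e1, e2] at i1 i2
    have j1 : Qn n s A * Iξn n B ≤ ∫⁻ r in B, Qn n r A ∂(Iξn n) + ε n * Iξn n B := by
      rw [← setLIntegral_const, ← setLIntegral_const,
        ← lintegral_add_right _ measurable_const]
      exact setLIntegral_mono' hB fun r hr => hεle n s hs r hr A
    have j2 : ∫⁻ r in B, Qn n r A ∂(Iξn n) ≤ Qn n s A * Iξn n B + ε n * Iξn n B := by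
      rw [← add_mul, ← setLIntegral_const]
      exact setLIntegral_mono' hB fun r hr => hεle n r hr s hs A
    have hq : Qn n s A ≤ 1 := prob_le_one
    have fin : ∀ x y : ℝ≥0∞, x * a ≤ y * a + c n * a → x ≤ y + c n := by
      intro x y hxy
      rw [← add_mul] at hxy
      exact (ENNReal.mul_le_mul_iff_left hIξB_pos.ne' haf).1 hxy
    have hca : c n * a = tvDist (νn n) ν + ε n * Iξn n B + ((a - Iξn n B) + (Iξn n B - a)) :=
      ENNReal.div_mul_cancel hIξB_pos.ne' haf
    constructor
    · apply fin
      rw [hca]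
      calc Qn n s A * a ≤ Qn n s A * (Iξn n B + (a - Iξn n B)) := by
            gcongr; exact le_add_tsub
        _ ≤ Qn n s A * Iξn n B + (a - Iξn n B) := by
            rw [mul_add]; gcongr; exact mul_le_of_le_one_left (zero_le) hq
        _ ≤ (Q A * a + tvDist (νn n) ν + ε n * Iξn n B) + (a - Iξn n B) := by
            gcongr; exact j1.trans (by gcongr)
        _ ≤ (Q A * a + tvDist (νn n) ν + ε n * Iξn n B) + ((a - Iξn n B) + (Iξn n B - a)) := by
            gcongr; exact le_self_add
        _ = _ := by ring
    · apply fin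
      rw [hca]
      calc Q A * a ≤ Qn n s A * Iξn n B + ε n * Iξn n B + tvDist (νn n) ν :=
            i2.trans (by gcongr)
        _ ≤ Qn n s A * (a + (Iξn n B - a)) + ε n * Iξn n B + tvDist (νn n) ν := by
            gcongr; exact le_add_tsub
        _ ≤ (Qn n s A * a + (Iξn n B - a)) + ε n * Iξn n B + tvDist (νn n) ν := by
            rw [mul_add]; gcongr; exact mul_le_of_le_one_left (zero_le) hq
        _ ≤ (Qn n s A * a + ((a - Iξn n B) + (Iξn n B - a))) + ε n * Iξn n B
              + tvDist (νn n) ν := by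
            gcongr; exact le_add_self
        _ = _ := by ring
  exact tv_le_of_forall _ _ _ (fun A hA => (main A hA).1) (fun A hA => (main A hA).2)
end
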